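/- Let (W_i)_{i ≥ 0} be Jordan domains in ℂ such that diam(W_i) → 0 as i → ∞, W_0 ∩ W_i ≠ ∅ for every i ≥ 1, and cl(W_i) ∩ cl(W_j) = ∅ whenever i > j ≥ 1. Let K be the closure of ⋃_{i ≥ 0} W_i and let W be the union of K with all bounded connected components of ℂ \ K (the set obtained from K by filling in the holes). Then W is a Jordan disk: the topological frontier of W is a Jordan curve. -/

import Mathlib

open Set Metric Bornology

/-- A Jordan curve: a subset of `ℂ` homeomorphic to the unit circle. -/
def IsJordanCurve (C : Set ℂ) : Prop :=
  Nonempty (↥(Metric.sphere (0 : ℂ) 1) ≃ₜ ↥C)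

/-- A Jordan domain: a nonempty bounded connected open subset of `ℂ` whose frontier is
a Jordan curve. -/
def IsJordanDomain (W : Set ℂ) : Prop :=
  IsOpen W ∧ IsConnected W ∧ IsBounded W ∧ IsJordanCurve (frontier W)

/-- The set obtained from `K` by filling in the holes: the union of `K` with all bounded
connected components of `ℂ \ K`. -/
def fillHoles (K : Set ℂ) : Set ℂ :=
  K ∪ {z : ℂ | z ∉ K ∧ IsBounded (connectedComponentIn Kᶜ z)}


open Set Metric Bornology Filter Topology

/-- `f` has a continuous logarithm on `X`. -/
def HasLogOn (f : ℂ → ℂ) (X : Set ℂ) : Prop :=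
  ∃ g : ℂ → ℂ, ContinuousOn g X ∧ ∀ z ∈ X, Complex.exp (g z) = f z

lemma hasLogOn_univ {f : ℂ → ℂ} (hf : Continuous f) (h0 : ∀ z, f z ≠ 0) : HasLogOn f univ := by
  have hsc : IsSimplyConnected (univ : Set ℂ) := by
    have : SimplyConnectedSpace (univ : Set ℂ) := by
      have : ContractibleSpace (univ : Set ℂ) := (Homeomorph.Set.univ ℂ).contractibleSpace
      infer_instance
    exact this
  obtain ⟨g, hg, hg2⟩ := Complex.exists_continuousOn_eqOn_exp_comp hsc isOpen_univ
    (hf.continuousOn (s := univ)) (by rintro ⟨z, -, hz⟩; exact h0 z hz)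
  exact ⟨g, hg, fun z hz => hg2 hz⟩

lemma exp_eq_const {S : Set ℂ} (hS : IsPreconnected S) {g h : ℂ → ℂ} (hg : ContinuousOn g S)
    (hh : ContinuousOn h S) (he : ∀ z ∈ S, Complex.exp (g z) = Complex.exp (h z)) :
    ∃ k : ℤ, ∀ z ∈ S, g z = h z + k * (2 * Real.pi * Complex.I) := by
  rcases S.eq_empty_or_nonempty with rfl | ⟨z0, hz0⟩
  · exact ⟨0, by simp⟩
  have hpi : (2 * Real.pi * Complex.I : ℂ) ≠ 0 := by
    simp [Real.pi_ne_zero]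
  -- the function (g - h)/(2πi) is integer valued
  have key : ∀ z ∈ S, ∃ k : ℤ, g z = h z + k * (2 * Real.pi * Complex.I) := fun z hz =>
    Complex.exp_eq_exp_iff_exists_int.1 (he z hz)
  have hpre : IsPreconnected ((fun z => ((g z - h z) / (2 * Real.pi * Complex.I)).re) '' S) := by
    apply hS.image
    exact Complex.continuous_re.comp_continuousOn ((hg.sub hh).div_const _)
  have hval : ∀ z ∈ S, ∀ k : ℤ, g z = h z + k * (2 * Real.pi * Complex.I) →
      ((g z - h z) / (2 * Real.pi * Complex.I)).re = k := by
    intro z hz k hk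
    rw [hk, add_sub_cancel_left, mul_div_cancel_right₀ _ hpi]; simp
  obtain ⟨k0, hk0⟩ := key z0 hz0
  refine ⟨k0, fun z hz => ?_⟩
  obtain ⟨k, hk⟩ := key z hz
  have : k = k0 := by
    by_contra hne
    have hoc := hpre.ordConnected
    have h1 := hval z hz k hk
    have h2 := hval z0 hz0 k0 hk0
    have m1 : (k : ℝ) ∈ ((fun z => ((g z - h z) / (2 * Real.pi * Complex.I)).re) '' S) := ⟨z, hz, h1⟩
    have m2 : (k0 : ℝ) ∈ ((fun z => ((g z - h z) / (2 * Real.pi * Complex.I)).re) '' S) :=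
      ⟨z0, hz0, h2⟩
    have half : ∀ a b : ℤ, a < b →
      (a : ℝ) ∈ ((fun z => ((g z - h z) / (2 * Real.pi * Complex.I)).re) '' S) →
      (b : ℝ) ∈ ((fun z => ((g z - h z) / (2 * Real.pi * Complex.I)).re) '' S) → False := by
      intro a b hab ha hb
      have hab' : (a : ℝ) + 1 ≤ b := by exact_mod_cast hab
      obtain ⟨w, hw, hw2⟩ := hoc.out ha hb (show (a : ℝ) + 1/2 ∈ Icc (a : ℝ) b from
        ⟨by linarith, by linarith⟩)
      obtain ⟨j, hj⟩ := key w hw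
      have h3 : ((j : ℤ) : ℝ) = a + 1/2 := by rw [← hval w hw j hj]; exact hw2
      have h4 : ((2 * j : ℤ) : ℝ) = ((2 * a + 1 : ℤ) : ℝ) := by push_cast; linarith
      have h5 : 2 * j = 2 * a + 1 := by exact_mod_cast h4
      omega
    rcases lt_or_gt_of_ne hne with h | h
    · exact half _ _ h m1 m2
    · exact half _ _ h m2 m1
  rw [hk, this]

lemma HasLogOn.mul {f1 f2 : ℂ → ℂ} {X : Set ℂ} (h1 : HasLogOn f1 X) (h2 : HasLogOn f2 X) :
    HasLogOn (fun z => f1 z * f2 z) X := by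
  obtain ⟨g1, c1, e1⟩ := h1
  obtain ⟨g2, c2, e2⟩ := h2
  exact ⟨fun z => g1 z + g2 z, c1.add c2, fun z hz => by rw [Complex.exp_add, e1 z hz, e2 z hz]⟩

lemma HasLogOn.inv {f1 : ℂ → ℂ} {X : Set ℂ} (h1 : HasLogOn f1 X) :
    HasLogOn (fun z => (f1 z)⁻¹) X := by
  obtain ⟨g1, c1, e1⟩ := h1
  exact ⟨fun z => - g1 z, c1.neg, fun z hz => by rw [Complex.exp_neg, e1 z hz]⟩

lemma HasLogOn.congr {f1 f2 : ℂ → ℂ} {X : Set ℂ} (h1 : HasLogOn f1 X) (h : ∀ z ∈ X, f1 z = f2 z) :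
    HasLogOn f2 X := by
  obtain ⟨g1, c1, e1⟩ := h1
  exact ⟨g1, c1, fun z hz => by rw [e1 z hz, h z hz]⟩

lemma hasLogOn_of_near_one {f : ℂ → ℂ} {X : Set ℂ} (hf : ContinuousOn f X)
    (h : ∀ z ∈ X, ‖f z - 1‖ < 1) : HasLogOn f X := by
  have hs : ∀ z ∈ X, f z ∈ Complex.slitPlane := fun z hz => by
    have := Complex.mem_slitPlane_of_norm_lt_one (h z hz)
    simpa using this
  refine ⟨fun z => Complex.log (f z), hf.clog hs, fun z hz => Complex.exp_log
    (Complex.slitPlane_ne_zero (hs z hz))⟩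

/-- Moving the pole inside a complementary component. -/
lemma hasLogOn_div_of_component {A : Set ℂ} (hA : IsClosed A) {p q : ℂ} (hp : p ∈ Aᶜ)
    (hq : q ∈ connectedComponentIn Aᶜ p) : HasLogOn (fun z => (z - p) / (z - q)) A := by
  have step : ∀ x ∈ Aᶜ, ∃ r > 0, ball x r ⊆ Aᶜ ∧
      ∀ y ∈ ball x r, HasLogOn (fun z => (z - y) / (z - x)) A := by
    intro x hx
    obtain ⟨r, hr, hb⟩ := Metric.isOpen_iff.1 hA.isOpen_compl x hx
    refine ⟨r, hr, hb, fun y hy => ?_⟩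
    have hne : ∀ z ∈ A, z - x ≠ 0 := fun z hz h => hx (by rwa [sub_eq_zero.1 h] at hz)
    apply hasLogOn_of_near_one
    · exact ContinuousOn.div (by fun_prop) (by fun_prop) hne
    · intro z hz
      have h1 : (z - y) / (z - x) - 1 = (x - y) / (z - x) := by
        field_simp [hne z hz]; ring
      have h2 : r ≤ ‖z - x‖ := by
        by_contra hlt
        push Not at hlt
        exact hb (by rwa [mem_ball, dist_eq_norm]) hz
      rw [h1, norm_div, div_lt_one (by linarith)]
      rw [mem_ball, dist_comm, dist_eq_norm] at hy
      linarith
  have ne : ∀ x ∈ Aᶜ, ∀ z ∈ A, z - x ≠ 0 := fun x hx z hz h => hx (by rwa [sub_eq_zero.1 h] at hz)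
  -- the good set
  set G : Set ℂ := {y | y ∈ Aᶜ ∧ HasLogOn (fun z => (z - p) / (z - y)) A} with hG
  have hpG : p ∈ G := ⟨hp, ⟨fun _ => 0, continuousOn_const, fun z hz => by
    simp [div_self (ne p hp z hz)]⟩⟩
  have hGo : IsOpen G := by
    rw [Metric.isOpen_iff]
    rintro x ⟨hx, hlx⟩
    obtain ⟨r, hr, hb, hl⟩ := step x hx
    refine ⟨r, hr, fun y hy => ⟨hb hy, ?_⟩⟩
    refine (hlx.mul (hl y hy).inv).congr fun z hz => ?_
    have := ne x hx z hz
    have := ne y (hb hy) z hz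
    field_simp
  have hGc : IsOpen (Aᶜ \ G) := by
    rw [Metric.isOpen_iff]
    rintro x ⟨hx, hlx⟩
    obtain ⟨r, hr, hb, hl⟩ := step x hx
    refine ⟨r, hr, fun y hy => ⟨hb hy, fun hyG => hlx ⟨hx, ?_⟩⟩⟩
    refine (hyG.2.mul (hl y hy)).congr fun z hz => ?_
    have := ne x hx z hz
    have := ne y (hb hy) z hz
    field_simp
  have hsub : connectedComponentIn Aᶜ p ⊆ G := by
    apply isPreconnected_connectedComponentIn.subset_left_of_subset_union hGo hGc
    · exact disjoint_sdiff_right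
    · intro x hx
      have := connectedComponentIn_subset _ _ hx
      by_cases h : x ∈ G
      · exact Or.inl h
      · exact Or.inr ⟨this, h⟩
    · exact ⟨p, mem_connectedComponentIn hp, hpG⟩
  exact (hsub hq).2

lemma no_log_sphere {p : ℂ} {R : ℝ} (hR : 0 < R) : ¬ HasLogOn (fun z => z - p) (sphere p R) := by
  rintro ⟨g, hg, he⟩
  let c : ℂ → ℂ := fun t => p + R * Complex.exp (t * Complex.I)
  let S : Set ℂ := (fun t : ℝ => (t : ℂ)) '' univ
  have hS : IsPreconnected S := isPreconnected_univ.image _ (by fun_prop)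
  have hc : MapsTo c S (sphere p R) := by
    rintro _ ⟨t, -, rfl⟩
    simp [c, Complex.norm_exp_ofReal_mul_I, abs_of_pos hR]
  obtain ⟨k, hk⟩ := exp_eq_const hS (g := fun t => g (c t))
    (h := fun t => Real.log R + t * Complex.I)
    (hg.comp (by fun_prop) hc) (by fun_prop) (by
      intro z hz
      rw [he _ (hc hz), Complex.exp_add, ← Complex.ofReal_exp, Real.exp_log hR]
      simp [c])
  have h0 := hk 0 ⟨0, trivial, by simp⟩
  have h1 := hk (2 * Real.pi) ⟨2 * Real.pi, trivial, by push_cast; rfl⟩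
  have hcc : c 0 = c (2 * Real.pi) := by simp [c, Complex.exp_two_pi_mul_I]
  rw [hcc, h1] at h0
  have : (2 * Real.pi * Complex.I : ℂ) = 0 := by linear_combination h0
  simp [Real.pi_ne_zero] at this

lemma frontier_component_subset {X : Set ℂ} (hX : IsClosed X) (p : ℂ) :
    frontier (connectedComponentIn Xᶜ p) ⊆ X := by
  intro z hz
  by_contra hzX
  have ho : IsOpen (connectedComponentIn Xᶜ p) := hX.isOpen_compl.connectedComponentIn
  have hz' : z ∉ connectedComponentIn Xᶜ p := by
    rw [ho.frontier_eq] at hz; exact hz.2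
  have hozz : IsOpen (connectedComponentIn Xᶜ z) := hX.isOpen_compl.connectedComponentIn
  have hzc : z ∈ closure (connectedComponentIn Xᶜ p) := frontier_subset_closure hz
  obtain ⟨w, hw1, hw2⟩ := mem_closure_iff.1 hzc _ hozz (mem_connectedComponentIn hzX)
  have e1 := connectedComponentIn_eq hw1
  have e2 := connectedComponentIn_eq hw2
  rw [e2, ← e1] at hz'
  exact hz' (mem_connectedComponentIn hzX)

lemma hasLog_bounded_comp {X : Set ℂ} (hX : IsCompact X) {p q : ℂ} (hp : p ∈ Xᶜ)
    (hb : IsBounded (connectedComponentIn Xᶜ p))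
    (hl : HasLogOn (fun z => (z - p) / (z - q)) X) (hq : q ∈ Xᶜ) :
    q ∈ connectedComponentIn Xᶜ p := by
  by_contra hqP
  set P := connectedComponentIn Xᶜ p with hP
  have hPo : IsOpen P := hX.isClosed.isOpen_compl.connectedComponentIn
  have hpP : p ∈ P := mem_connectedComponentIn hp
  obtain ⟨g, hg, he⟩ := hl
  obtain ⟨G, hG⟩ := ContinuousMap.exists_restrict_eq hX.isClosed
    (⟨X.domRestrict g, continuousOn_iff_continuous_domRestrict.1 hg⟩ : C(X, ℂ))
  have hGX : ∀ z ∈ X, G z = g z := fun z hz => by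
    have := congrArg (fun f : C(X, ℂ) => f ⟨z, hz⟩) hG
    simpa using this
  classical
  let F : ℂ → ℂ := P.piecewise (fun z => Complex.exp (G z) * (z - q)) (fun z => z - p)
  have hfr : frontier P ⊆ X := frontier_component_subset hX.isClosed p
  have hF : Continuous F := by
    apply Continuous.piecewise
    · intro z hz
      have hzX := hfr hz
      have : z - q ≠ 0 := fun h => hq (by rwa [sub_eq_zero.1 h] at hzX)
      rw [hGX z hzX, he z hzX, div_mul_cancel₀ _ this]
    · have := G.continuous
      fun_prop
    · fun_prop
  have hF0 : ∀ z, F z ≠ 0 := by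
    intro z
    by_cases hz : z ∈ P
    · simp only [F, piecewise_eq_of_mem _ _ _ hz]
      refine mul_ne_zero (Complex.exp_ne_zero _) fun h => hqP ?_
      rwa [← sub_eq_zero.1 h]
    · simp only [F, piecewise_eq_of_notMem _ _ _ hz]
      intro h
      exact hz (by rwa [sub_eq_zero.1 h])
  obtain ⟨L, hL, hLe⟩ := hasLogOn_univ hF hF0
  obtain ⟨R, hR, hR2⟩ := hb.subset_ball_lt 0 p
  refine no_log_sphere (p := p) hR ⟨L, hL.mono (subset_univ _), fun z hz => ?_⟩
  rw [hLe z trivial]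
  have : z ∉ P := fun h => by
    have := hR2 h
    rw [mem_ball] at this; rw [mem_sphere] at hz; linarith
  simp only [F, piecewise_eq_of_notMem _ _ _ this]

lemma far_connected {R : ℝ} (hR : 0 < R) : IsPreconnected ((closedBall (0 : ℂ) R)ᶜ) := by
  have h : (closedBall (0 : ℂ) R)ᶜ = Complex.exp '' {z | Real.log R < z.re} := by
    ext z
    simp only [mem_compl_iff, mem_closedBall, dist_zero_right, not_le, mem_image, mem_ofPred_eq]
    constructor
    · intro hz
      have hz0 : z ≠ 0 := by rintro rfl; simp at hz; linarith
      refine ⟨Complex.log z, ?_, Complex.exp_log hz0⟩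
      rw [Complex.log_re]
      exact Real.log_lt_log hR hz
    · rintro ⟨w, hw, rfl⟩
      rw [Complex.norm_exp]
      exact (Real.log_lt_iff_lt_exp hR).1 hw
  rw [h]
  exact (convex_halfSpace_re_gt _).isPreconnected.image _ Complex.continuous_exp.continuousOn

lemma mem_component_of_preconnected {X S : Set ℂ} {p q : ℂ} (hS : IsPreconnected S) (hSX : S ⊆ Xᶜ)
    (hp : p ∈ S) (hq : q ∈ S) : q ∈ connectedComponentIn Xᶜ p :=
  hS.subset_connectedComponentIn hp hSX hq

lemma unbounded_comp_eq {X : Set ℂ} (hX : IsCompact X) {p q : ℂ}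
    (hp : ¬ IsBounded (connectedComponentIn Xᶜ p)) (hq : ¬ IsBounded (connectedComponentIn Xᶜ q)) :
    connectedComponentIn Xᶜ p = connectedComponentIn Xᶜ q := by
  obtain ⟨R, hR0, hR⟩ := hX.isBounded.subset_closedBall_lt 0 (0 : ℂ)
  have hs : (closedBall (0 : ℂ) R)ᶜ ⊆ Xᶜ := compl_subset_compl.2 hR
  have f : ∀ p, ¬ IsBounded (connectedComponentIn Xᶜ p) →
      ∃ x ∈ (closedBall (0 : ℂ) R)ᶜ, x ∈ connectedComponentIn Xᶜ p := by
    intro p hp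
    by_contra h
    push Not at h
    exact hp (isBounded_closedBall.subset fun x hx => by_contra fun hx' => h x hx' hx)
  obtain ⟨x, hx, hxp⟩ := f p hp
  obtain ⟨y, hy, hyq⟩ := f q hq
  rw [connectedComponentIn_eq hxp, connectedComponentIn_eq hyq]
  exact connectedComponentIn_eq
    (mem_component_of_preconnected (far_connected hR0) hs hx hy)

/-- The Borsuk criterion. -/
lemma component_of_hasLog {X : Set ℂ} (hX : IsCompact X) {p q : ℂ} (hp : p ∈ Xᶜ) (hq : q ∈ Xᶜ)
    (hl : HasLogOn (fun z => (z - p) / (z - q)) X) :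
    q ∈ connectedComponentIn Xᶜ p := by
  by_cases hb : IsBounded (connectedComponentIn Xᶜ p)
  · exact hasLog_bounded_comp hX hp hb hl hq
  by_cases hb' : IsBounded (connectedComponentIn Xᶜ q)
  · have := hasLog_bounded_comp hX hq hb' (hl.inv.congr (fun z _ => by rw [inv_div])) hp
    rw [← connectedComponentIn_eq this]
    exact mem_connectedComponentIn hq
  · rw [unbounded_comp_eq hX hb hb']
    exact mem_connectedComponentIn hq

/-- The Janiszewski theorem. -/
lemma janiszewski {A B : Set ℂ} (hA : IsCompact A) (hB : IsCompact B)
    (hAB : IsPreconnected (A ∩ B)) {p q : ℂ} (hpA : p ∈ Aᶜ) (hpB : p ∈ Bᶜ)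
    (hA' : q ∈ connectedComponentIn Aᶜ p) (hB' : q ∈ connectedComponentIn Bᶜ p) :
    q ∈ connectedComponentIn (A ∪ B)ᶜ p := by
  have hqA := connectedComponentIn_subset _ _ hA'
  have hqB := connectedComponentIn_subset _ _ hB'
  apply component_of_hasLog (hA.union hB) (by simp_all) (by simp_all)
  obtain ⟨gA, cA, eA⟩ := hasLogOn_div_of_component hA.isClosed hpA hA'
  obtain ⟨gB, cB, eB⟩ := hasLogOn_div_of_component hB.isClosed hpB hB'
  obtain ⟨k, hk⟩ := exp_eq_const hAB (cA.mono inter_subset_left) (cB.mono inter_subset_right)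
    (fun z hz => by rw [eA z hz.1, eB z hz.2])
  classical
  let g : ℂ → ℂ := A.piecewise gA (fun z => gB z + k * (2 * Real.pi * Complex.I))
  have hgA : ∀ z ∈ A, g z = gA z := fun z hz => piecewise_eq_of_mem _ _ _ hz
  have hgB : ∀ z ∈ B, g z = gB z + k * (2 * Real.pi * Complex.I) := fun z hz => by
    by_cases h : z ∈ A
    · rw [hgA z h, hk z ⟨h, hz⟩]
    · exact piecewise_eq_of_notMem _ _ _ h
  refine ⟨g, ?_, ?_⟩
  · apply ContinuousOn.union_of_isClosed _ _ hA.isClosed hB.isClosed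
    · exact cA.congr hgA
    · exact (cB.add continuousOn_const).congr hgB
  · rintro z (hz | hz)
    · rw [hgA z hz, eA z hz]
    · rw [hgB z hz, Complex.exp_add, eB z hz, mul_comm (k : ℂ), ]
      rw [mul_comm (2 * Real.pi * Complex.I : ℂ), Complex.exp_int_mul_two_pi_mul_I, mul_one]

/-- Unicoherence of the plane, for open sets. -/
lemma open_unicoherence {V O : Set ℂ} (hV : IsOpen V) (hO : IsOpen O) (hVc : IsPreconnected V)
    (hOc : IsPreconnected O) (hVO : V ∪ O = univ) : IsPreconnected (V ∩ O) := by
  intro u v hu hv huv hnu hnv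
  by_contra hemp
  rw [not_nonempty_iff_eq_empty] at hemp
  classical
  set A := V ∩ O ∩ u with hA
  set A' := V ∩ O ∩ v with hA'
  have hAo : IsOpen A := (hV.inter hO).inter hu
  have hAo' : IsOpen A' := (hV.inter hO).inter hv
  have hdis : ∀ z, z ∈ A → z ∉ A' := fun z h1 h2 => by
    have : z ∈ V ∩ O ∩ (u ∩ v) := ⟨h1.1, h1.2, h2.2⟩
    rw [hemp] at this; exact this
  have hfr : ∀ z ∈ frontier A', z ∈ V → z ∈ O → False := by
    intro z hz h1 h2
    rw [hAo'.frontier_eq] at hz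
    rcases huv ⟨h1, h2⟩ with h | h
    · obtain ⟨w, hw1, hw2⟩ := mem_closure_iff.1 hz.1 A hAo ⟨⟨h1, h2⟩, h⟩
      exact hdis w hw1 hw2
    · exact hz.2 ⟨⟨h1, h2⟩, h⟩
  obtain ⟨ρ, h0, h1, -⟩ := exists_continuous_zero_one_of_isClosed hO.isClosed_compl
    hV.isClosed_compl (by
      rw [Set.disjoint_left]
      intro z hz1 hz2
      have : z ∈ V ∪ O := by rw [hVO]; trivial
      rcases this with h | h
      exacts [hz2 h, hz1 h])
  have hρ := ρ.continuous
  let e : ℂ → ℂ := fun z => (ρ z : ℂ) * (2 * Real.pi * Complex.I)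
  have hec : Continuous e := by fun_prop
  let f : ℂ → ℂ := A'.piecewise (fun z => Complex.exp (e z)) (fun _ => 1)
  have hf : Continuous f := by
    apply Continuous.piecewise _ (by fun_prop) continuous_const
    intro z hz
    by_cases hzO : z ∈ O
    · have hzV : z ∉ V := fun h => hfr z hz h hzO
      have : ρ z = 1 := h1 hzV
      simp [e, this, Complex.exp_two_pi_mul_I]
    · have : ρ z = 0 := h0 hzO
      simp [e, this]
  obtain ⟨L, hL, hLe⟩ := hasLogOn_univ hf (by
    intro z
    by_cases hz : z ∈ A'
    · simp only [f, piecewise_eq_of_mem _ _ _ hz]; exact Complex.exp_ne_zero _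
    · simp only [f, piecewise_eq_of_notMem _ _ _ hz]; exact one_ne_zero)
  let gV : ℂ → ℂ := A'.piecewise e (fun _ => 0)
  let gO : ℂ → ℂ := A'.piecewise (fun z => e z - 2 * Real.pi * Complex.I) (fun _ => 0)
  have hgV : ContinuousOn gV V := by
    apply ContinuousOn.piecewise
    · rintro z ⟨hzV, hz⟩
      have : ρ z = 0 := h0 fun h => hfr z hz hzV h
      simp [e, this]
    · exact hec.continuousOn
    · exact continuousOn_const
  have hgO : ContinuousOn gO O := by
    apply ContinuousOn.piecewise
    · rintro z ⟨hzO, hz⟩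
      have : ρ z = 1 := h1 fun h => hfr z hz h hzO
      simp [e, this]
    · fun_prop
    · exact continuousOn_const
  obtain ⟨k, hk⟩ := exp_eq_const hVc (hL.mono (subset_univ _)) hgV (fun z hz => by
    rw [hLe z trivial]
    by_cases hz : z ∈ A'
    · simp only [f, gV, piecewise_eq_of_mem _ _ _ hz]
    · simp only [f, gV, piecewise_eq_of_notMem _ _ _ hz]; simp)
  obtain ⟨k', hk'⟩ := exp_eq_const hOc (hL.mono (subset_univ _)) hgO (fun z hz => by
    rw [hLe z trivial]
    by_cases hz : z ∈ A'
    · simp only [f, gO, piecewise_eq_of_mem _ _ _ hz]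
      rw [Complex.exp_sub, Complex.exp_two_pi_mul_I, div_one]
    · simp only [f, gO, piecewise_eq_of_notMem _ _ _ hz]; simp)
  obtain ⟨a, ha, hau⟩ := hnu
  obtain ⟨b, hb, hbv⟩ := hnv
  have haA : a ∉ A' := hdis a ⟨ha, hau⟩
  have hbA : b ∈ A' := ⟨hb, hbv⟩
  have e1 := hk a ha.1
  have e2 := hk' a ha.2
  have e3 := hk b hb.1
  have e4 := hk' b hb.2
  simp only [gV, gO, piecewise_eq_of_mem _ _ _ hbA, piecewise_eq_of_notMem _ _ _ haA] at e1 e2 e3 e4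
  have : (2 * Real.pi * Complex.I : ℂ) = 0 := by linear_combination e1 - e2 - e3 + e4
  simp [Real.pi_ne_zero] at this

open Set Metric Bornology Filter Topology

lemma fill_compact {V X : Set ℂ} (hb : IsBounded V) (hVc : IsPreconnected Vᶜ)
    (hX : IsCompact X) (hXV : X ⊆ V) : ∃ Y, IsCompact Y ∧ X ⊆ Y ∧ Y ⊆ V ∧ IsPreconnected Yᶜ := by
  obtain ⟨R, hR0, hR⟩ := hb.subset_closedBall_lt 0 (0 : ℂ)
  have hfar := far_connected hR0
  obtain ⟨q, hq⟩ : ∃ q : ℂ, q ∈ (closedBall (0 : ℂ) R)ᶜ := by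
    refine ⟨((R + 1 : ℝ) : ℂ), ?_⟩
    simp only [mem_compl_iff, mem_closedBall, dist_zero_right, Complex.norm_real, Real.norm_eq_abs]
    rw [abs_of_pos (by linarith)]; linarith
  have hqV : q ∈ Vᶜ := fun h => hq (hR h)
  refine ⟨(connectedComponentIn Xᶜ q)ᶜ, ?_, ?_, ?_, ?_⟩
  · apply Metric.isCompact_of_isClosed_isBounded
    · exact hX.isClosed.isOpen_compl.connectedComponentIn.isClosed_compl
    · refine (isBounded_closedBall (x := (0 : ℂ)) (r := R)).subset ?_
      rw [compl_subset_comm]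
      exact hfar.subset_connectedComponentIn hq
        (compl_subset_compl.2 (hXV.trans hR))
  · intro x hx h
    exact connectedComponentIn_subset _ _ h hx
  · rw [compl_subset_comm]
    exact hVc.subset_connectedComponentIn hqV (compl_subset_compl.2 hXV)
  · rw [compl_compl]; exact isPreconnected_connectedComponentIn

lemma hasLogOn_sub_far {X : Set ℂ} {q : ℂ} {M : ℝ} (hX : X ⊆ closedBall 0 M) (hq : M < ‖q‖) :
    HasLogOn (fun z => z - q) X := by
  rcases X.eq_empty_or_nonempty with rfl | ⟨x0, hx0⟩
  · exact ⟨fun _ => 0, by simp, by simp⟩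
  have hM : 0 ≤ M := by
    have := hX hx0
    simp at this
    exact (norm_nonneg _).trans this
  have hq0 : q ≠ 0 := by rintro rfl; simp at hq; linarith
  have h1 : HasLogOn (fun z => 1 - z / q) X := by
    apply hasLogOn_of_near_one (by fun_prop)
    intro z hz
    have := hX hz
    simp only [mem_closedBall, dist_zero_right] at this
    have e : (1 - z / q - 1) = -(z / q) := by ring
    rw [e, norm_neg, norm_div, div_lt_one (by linarith)]
    linarith
  have h2 : HasLogOn (fun _ => -q) X :=
    ⟨fun _ => Complex.log (-q), continuousOn_const, fun z _ => Complex.exp_log (neg_ne_zero.2 hq0)⟩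
  refine (h2.mul h1).congr fun z _ => ?_
  field_simp; ring

/-- Key topological step in the Riemann mapping theorem. -/
lemma hasLogOn_compact_of_inj {V : Set ℂ} (hV : IsOpen V) (hb : IsBounded V)
    (hVp : IsPreconnected V) (hVc : IsPreconnected Vᶜ) {ψ : ℂ → ℂ} (hψ : ContinuousOn ψ V)
    (hinj : InjOn ψ V) (hopen : ∀ O ⊆ V, IsOpen O → IsOpen (ψ '' O)) {c : ℂ} (hc : c ∉ ψ '' V)
    {X : Set ℂ} (hX : IsCompact X) (hXV : X ⊆ V) : HasLogOn (fun z => ψ z - c) X := by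
  rcases X.eq_empty_or_nonempty with rfl | ⟨x0, hx0⟩
  · exact ⟨fun _ => 0, by simp, by simp⟩
  obtain ⟨Y, hY, hXY, hYV, hYc⟩ := fill_compact hb hVc hX hXV
  have hconn : IsPreconnected (V ∩ Yᶜ) := by
    apply open_unicoherence hV hY.isClosed.isOpen_compl hVp hYc
    rw [eq_univ_iff_forall]
    intro z
    by_cases hz : z ∈ Y
    · exact Or.inl (hYV hz)
    · exact Or.inr hz
  have hψY : IsCompact (ψ '' Y) := hY.image_of_continuousOn (hψ.mono hYV)
  have hcY : c ∈ (ψ '' Y)ᶜ := fun h => hc (image_mono hYV h)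
  set B := connectedComponentIn (ψ '' Y)ᶜ c with hB
  have hBo : IsOpen B := hψY.isClosed.isOpen_compl.connectedComponentIn
  have hcB : c ∈ B := mem_connectedComponentIn hcY
  have hfr : frontier B ⊆ ψ '' Y := frontier_component_subset hψY.isClosed c
  have hunb : ¬ IsBounded B := by
    intro hBb
    have hBc : IsCompact (closure B) := hBb.isCompact_closure
    have hclB : closure B ⊆ B ∪ ψ '' Y := by
      intro z hz
      by_cases h : z ∈ B
      · exact Or.inl h
      · exact Or.inr (hfr (by rw [hBo.frontier_eq]; exact ⟨hz, h⟩))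
    have hψVo : IsOpen (ψ '' V) := hopen V subset_rfl hV
    -- image of V \ Y
    have himg : IsPreconnected (ψ '' (V ∩ Yᶜ)) := hconn.image _ (hψ.mono inter_subset_left)
    have hdisj : ψ '' (V ∩ Yᶜ) ⊆ (ψ '' Y)ᶜ := by
      rintro _ ⟨x, ⟨hxV, hxY⟩, rfl⟩ ⟨y, hy, hxy⟩
      rw [hinj (hYV hy) hxV hxy] at hy
      exact hxY hy
    have noclopen : ∀ S : Set ℂ, IsOpen S → IsCompact S → S.Nonempty → False := by
      intro S h1 h2 h3
      have := IsClopen.eq_univ ⟨h2.isClosed, h1⟩ h3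
      rw [this] at h2
      exact noncompact_univ ℂ h2
    by_cases hmeet : (ψ '' (V ∩ Yᶜ) ∩ B).Nonempty
    · obtain ⟨y, hy, hyB⟩ := hmeet
      have hsub : ψ '' (V ∩ Yᶜ) ⊆ B := by
        rw [hB, connectedComponentIn_eq hyB]
        exact himg.subset_connectedComponentIn hy hdisj
      have heq : ψ '' V ∪ B = ψ '' Y ∪ closure B := by
        apply subset_antisymm
        · rintro z (⟨x, hx, rfl⟩ | hz)
          · by_cases hxY : x ∈ Y
            · exact Or.inl ⟨x, hxY, rfl⟩
            · exact Or.inr (subset_closure (hsub ⟨x, ⟨hx, hxY⟩, rfl⟩))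
          · exact Or.inr (subset_closure hz)
        · rintro z (hz | hz)
          · exact Or.inl (image_mono hYV hz)
          · rcases hclB hz with h | h
            · exact Or.inr h
            · exact Or.inl (image_mono hYV h)
      exact noclopen (ψ '' V ∪ B) (hψVo.union hBo) (heq ▸ hψY.union hBc) ⟨c, Or.inr hcB⟩
    · have hBV : ∀ z ∈ B, z ∉ ψ '' V := by
        rintro z hz ⟨x, hx, rfl⟩
        by_cases hxY : x ∈ Y
        · exact connectedComponentIn_subset _ _ hz ⟨x, hxY, rfl⟩
        · exact hmeet ⟨_, ⟨x, ⟨hx, hxY⟩, rfl⟩, hz⟩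
      have hcl : closure B ⊆ B := by
        intro z hz
        rcases hclB hz with h | h
        · exact h
        · obtain ⟨w, hw1, hw2⟩ := mem_closure_iff.1 hz _ hψVo (image_mono hYV h)
          exact (hBV w hw2 hw1).elim
      have hcl' : closure B = B := subset_antisymm hcl subset_closure
      exact noclopen B hBo (hcl' ▸ hBc) ⟨c, hcB⟩
  obtain ⟨M, hM⟩ := hψY.isBounded.subset_closedBall (0 : ℂ)
  obtain ⟨q, hqB, hqM⟩ : ∃ q ∈ B, M < ‖q‖ := by
    by_contra h
    push Not at h
    exact hunb ((isBounded_closedBall (x := (0 : ℂ)) (r := M)).subset fun x hx => by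
      simpa using h x hx)
  have h1 := hasLogOn_div_of_component hψY.isClosed hcY hqB
  have h2 := hasLogOn_sub_far hM hqM
  obtain ⟨g, hg, he⟩ := h1.mul h2
  refine ⟨fun z => g (ψ z), hg.comp (hψ.mono hXV) (fun x hx => ⟨x, hXY hx, rfl⟩), fun z hz => ?_⟩
  have hm : ψ z ∈ ψ '' Y := ⟨z, hXY hz, rfl⟩
  rw [he _ hm]
  refine div_mul_cancel₀ _ ?_
  intro h
  rw [sub_eq_zero.1 h] at hm
  exact connectedComponentIn_subset _ _ hqB hm

lemma hasLogOn_of_compact {V : Set ℂ} (hV : IsOpen V) (hVp : IsPreconnected V) {f : ℂ → ℂ}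
    (h : ∀ X ⊆ V, IsCompact X → HasLogOn f X) : HasLogOn f V := by
  rcases V.eq_empty_or_nonempty with rfl | ⟨z0, hz0⟩
  · exact ⟨fun _ => 0, by simp, by simp⟩
  have hpc : IsPathConnected V := (hV.isConnected_iff_isPathConnected).1 ⟨⟨z0, hz0⟩, hVp⟩
  have hX : ∀ z, ∃ X : Set ℂ, z ∈ V → (IsCompact X ∧ IsPreconnected X ∧ X ⊆ V ∧ z0 ∈ X ∧ X ∈ 𝓝 z) := by
    intro z
    by_cases hz : z ∈ V
    swap
    · exact ⟨∅, fun h => (hz h).elim⟩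
    have hj := hpc.joinedIn z0 hz0 z hz
    obtain ⟨r, hr, hrV⟩ := Metric.nhds_basis_closedBall.mem_iff.1 (hV.mem_nhds hz)
    refine ⟨range hj.somePath ∪ closedBall z r, fun _ => ⟨?_, ?_, ?_, ?_, ?_⟩⟩
    · exact (isCompact_range hj.somePath.continuous).union (isCompact_closedBall z r)
    · apply IsPreconnected.union z
      · exact ⟨1, by simp⟩
      · exact mem_closedBall_self hr.le
      · exact isPreconnected_range hj.somePath.continuous
      · exact (convex_closedBall z r).isPreconnected
    · apply union_subset _ hrV
      rintro _ ⟨t, rfl⟩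
      exact hj.somePath_mem t
    · exact Or.inl ⟨0, by simp⟩
    · exact mem_of_superset (closedBall_mem_nhds z hr) subset_union_right
  choose X hX using hX
  obtain ⟨l, -, hl⟩ := h {z0} (by simpa using hz0) isCompact_singleton
  have hlog : ∀ Y : Set ℂ, ∃ g : ℂ → ℂ, Y ⊆ V → IsCompact Y → z0 ∈ Y →
      (ContinuousOn g Y ∧ (∀ z ∈ Y, Complex.exp (g z) = f z) ∧ g z0 = l z0) := by
    intro Y
    by_cases hY : Y ⊆ V ∧ IsCompact Y ∧ z0 ∈ Y
    · obtain ⟨g, hg, he⟩ := h Y hY.1 hY.2.1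
      refine ⟨fun z => g z - g z0 + l z0, fun _ _ _ => ⟨by fun_prop, fun z hz => ?_, by ring⟩⟩
      rw [Complex.exp_add, Complex.exp_sub, he z hz, he z0 hY.2.2, hl z0 rfl]
      have : f z0 ≠ 0 := by rw [← hl z0 rfl]; exact Complex.exp_ne_zero _
      field_simp
    · exact ⟨0, fun h1 h2 h3 => (hY ⟨h1, h2, h3⟩).elim⟩
  choose G hG using hlog
  have uniq : ∀ (Y Z : Set ℂ), Y ⊆ Z → Z ⊆ V → IsCompact Y → IsCompact Z → z0 ∈ Y →
      IsPreconnected Y → ∀ z ∈ Y, G Y z = G Z z := by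
    intro Y Z hYZ hZV hY hZ hzY hYp
    obtain ⟨c1, e1, n1⟩ := hG Y (hYZ.trans hZV) hY hzY
    obtain ⟨c2, e2, n2⟩ := hG Z hZV hZ (hYZ hzY)
    obtain ⟨k, hk⟩ := exp_eq_const hYp c1 (c2.mono hYZ) (fun z hz => by rw [e1 z hz, e2 z (hYZ hz)])
    have := hk z0 hzY
    rw [n1, n2] at this
    intro z hz
    rw [hk z hz]
    linear_combination -this
  have key : ∀ z ∈ V, ∀ w ∈ X z, G (X w) w = G (X z) w := by
    intro z hz w hw
    obtain ⟨a1, a2, a3, a4, a5⟩ := hX z hz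
    obtain ⟨b1, b2, b3, b4, b5⟩ := hX w (a3 hw)
    rw [uniq (X w) (X w ∪ X z) subset_union_left (union_subset b3 a3) b1 (b1.union a1) b4 b2 w
      (mem_of_mem_nhds b5), uniq (X z) (X w ∪ X z) subset_union_right (union_subset b3 a3) a1
      (b1.union a1) a4 a2 w hw]
  refine ⟨fun w => G (X w) w, ?_, ?_⟩
  · intro z hz
    obtain ⟨a1, a2, a3, a4, a5⟩ := hX z hz
    have hc := ((hG (X z) a3 a1 a4).1).continuousAt a5
    refine ContinuousAt.continuousWithinAt (hc.congr ?_)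
    filter_upwards [a5] with w hw
    exact (key z hz w hw).symm
  · intro z hz
    obtain ⟨a1, a2, a3, a4, a5⟩ := hX z hz
    exact (hG (X z) a3 a1 a4).2.1 z (mem_of_mem_nhds a5)

lemma hasLogOn_of_inj {V : Set ℂ} (hV : IsOpen V) (hb : IsBounded V)
    (hVp : IsPreconnected V) (hVc : IsPreconnected Vᶜ) {ψ : ℂ → ℂ} (hψ : ContinuousOn ψ V)
    (hinj : InjOn ψ V) (hopen : ∀ O ⊆ V, IsOpen O → IsOpen (ψ '' O)) {c : ℂ} (hc : c ∉ ψ '' V) :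
    HasLogOn (fun z => ψ z - c) V :=
  hasLogOn_of_compact hV hVp fun _ hXV hX =>
    hasLogOn_compact_of_inj hV hb hVp hVc hψ hinj hopen hc hX hXV

open Set Metric Bornology Filter Topology

lemma open_image_of_deriv_ne_zero {V : Set ℂ} (hV : IsOpen V) {ψ : ℂ → ℂ}
    (hd : DifferentiableOn ℂ ψ V) (h0 : ∀ z ∈ V, deriv ψ z ≠ 0) :
    ∀ O ⊆ V, IsOpen O → IsOpen (ψ '' O) := by
  intro O hOV hO
  rw [isOpen_iff_mem_nhds]
  rintro _ ⟨z, hz, rfl⟩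
  have han : AnalyticAt ℂ ψ z := hd.analyticAt (hV.mem_nhds (hOV hz))
  have hs : HasStrictDerivAt ψ (deriv ψ z) z := han.hasStrictDerivAt
  rw [← hs.map_nhds_eq (h0 z (hOV hz))]
  exact image_mem_map (hO.mem_nhds hz)

/-- Local form of the Hurwitz theorem. -/
lemma hurwitz_local {l : Filter ℕ} [l.NeBot] {O : Set ℂ} (hO : IsOpen O) {G : ℕ → ℂ → ℂ}
    {g : ℂ → ℂ} (hG : ∀ n, DifferentiableOn ℂ (G n) O) (hn : ∀ n, ∀ z ∈ O, G n z ≠ 0)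
    (hlim : TendstoLocallyUniformlyOn G g l O) {a : ℂ} (ha : a ∈ O) (h0 : g a = 0) :
    ∀ᶠ z in 𝓝 a, g z = 0 := by
  have hg : DifferentiableOn ℂ g O := hlim.differentiableOn (.of_forall hG) hO
  rcases (hg.analyticAt (hO.mem_nhds ha)).eventually_eq_zero_or_eventually_ne_zero with h | h
  · exact h
  exfalso
  rw [eventually_nhdsWithin_iff] at h
  obtain ⟨r, hr, hb⟩ := Metric.nhds_basis_closedBall.mem_iff.1
    (Filter.inter_mem h (hO.mem_nhds ha))
  have hbO : closedBall a r ⊆ O := fun z hz => (hb hz).2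
  have hsne : (sphere a r).Nonempty := (NormedSpace.sphere_nonempty).2 hr.le
  obtain ⟨w, hw, hmin⟩ := (isCompact_sphere a r).exists_isMinOn hsne
    ((hg.continuousOn.mono (sphere_subset_closedBall.trans hbO)).norm)
  have hw0 : g w ≠ 0 := by
    apply (hb (sphere_subset_closedBall hw)).1
    rintro rfl
    simp at hw; linarith
  have hm : 0 < ‖g w‖ := norm_pos_iff.2 hw0
  have hunif := (tendstoLocallyUniformlyOn_iff_forall_isCompact hO).1 hlim _ hbO
    (isCompact_closedBall a r)
  rw [Metric.tendstoUniformlyOn_iff] at hunif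
  obtain ⟨n, hn'⟩ := (hunif (‖g w‖ / 2) (by positivity)).exists
  have h1 : ‖G n a‖ < ‖g w‖ / 2 := by
    have := hn' a (mem_closedBall_self hr.le)
    rwa [h0, dist_zero_left] at this
  have hne : ∀ z ∈ closedBall a r, G n z ≠ 0 := fun z hz => hn n z (hbO hz)
  have hdc : DiffContOnCl ℂ (fun z => (G n z)⁻¹) (ball a r) := by
    apply DifferentiableOn.diffContOnCl
    rw [closure_ball a hr.ne']
    exact ((hG n).mono hbO).inv hne
  have h2 : ‖(G n a)⁻¹‖ ≤ (‖g w‖ / 2)⁻¹ := by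
    apply Complex.norm_le_of_forall_mem_frontier_norm_le isBounded_ball hdc
    · intro z hz
      rw [frontier_ball a hr.ne'] at hz
      rw [norm_inv]
      apply inv_anti₀ (by positivity)
      have e1 : ‖g w‖ ≤ ‖g z‖ := hmin hz
      have e2 := hn' z (sphere_subset_closedBall hz)
      rw [dist_eq_norm] at e2
      have e3 : ‖g z‖ ≤ ‖g z - G n z‖ + ‖G n z‖ := by
        have := norm_add_le (g z - G n z) (G n z); simpa using this
      linarith
    · exact subset_closure (mem_ball_self hr)
  rw [norm_inv] at h2
  have hpos : 0 < ‖G n a‖ := norm_pos_iff.2 (hne a (mem_closedBall_self hr.le))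
  have := (inv_le_inv₀ hpos (by positivity)).1 h2
  linarith

lemma exists_ultralimit {V : Set ℂ} (hV : IsOpen V) {F : ℕ → ℂ → ℂ}
    (hF : ∀ n, DifferentiableOn ℂ (F n) V) (hb : ∀ n, ∀ z ∈ V, ‖F n z‖ ≤ 1) :
    ∃ f : ℂ → ℂ, TendstoLocallyUniformlyOn F f (hyperfilter ℕ : Filter ℕ) V := by
  have hlim : ∀ z, ∃ y, z ∈ V → Tendsto (fun n => F n z) (hyperfilter ℕ : Filter ℕ) (𝓝 y) := by
    intro z
    by_cases hz : z ∈ V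
    · obtain ⟨y, -, hy⟩ := (isCompact_closedBall (0 : ℂ) 1).ultrafilter_le_nhds
        ((hyperfilter ℕ).map (fun n => F n z)) (by
          rw [le_principal_iff]
          exact Ultrafilter.mem_map.2 (Filter.univ_mem' fun n => by simpa using hb n z hz))
      exact ⟨y, fun _ => hy⟩
    · exact ⟨0, fun h => (hz h).elim⟩
  choose f hf using hlim
  refine ⟨f, ?_⟩
  rw [Metric.tendstoLocallyUniformlyOn_iff]
  intro ε hε z hz
  obtain ⟨r, hr, hrV⟩ := Metric.nhds_basis_closedBall.mem_iff.1 (hV.mem_nhds hz)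
  set s := r / 2 with hs
  have hs0 : 0 < s := by positivity
  have hlip : ∀ n, ∀ w ∈ ball z s, ‖F n w - F n z‖ ≤ 1 / s * ‖w - z‖ := by
    intro n w hw
    have hsub : ∀ x ∈ ball z s, closedBall x s ⊆ V := by
      intro x hx
      refine subset_trans (closedBall_subset_closedBall' ?_) hrV
      rw [mem_ball] at hx; linarith
    apply (convex_ball z s).norm_image_sub_le_of_norm_deriv_le (𝕜 := ℂ)
    · intro x hx
      exact (hF n).differentiableAt (hV.mem_nhds (hsub x hx (mem_closedBall_self hs0.le)))
    · intro x hx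
      apply Complex.norm_deriv_le_of_forall_mem_sphere_norm_le hs0
      · apply DifferentiableOn.diffContOnCl
        rw [closure_ball _ hs0.ne']
        exact (hF n).mono (hsub x hx)
      · intro y hy
        exact hb n y (hsub x hx (sphere_subset_closedBall hy))
    · exact mem_ball_self hs0
    · exact hw
  have hballV : ball z s ⊆ V := by
    refine subset_trans (subset_trans ball_subset_closedBall (closedBall_subset_closedBall ?_)) hrV
    linarith
  have hlipf : ∀ w ∈ ball z s, ‖f w - f z‖ ≤ 1 / s * ‖w - z‖ := by
    intro w hw
    have := ((hf w (hballV hw)).sub (hf z hz)).norm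
    exact le_of_tendsto this (.of_forall fun n => hlip n w hw)
  refine ⟨ball z (min s (ε * s / 4)), mem_nhdsWithin_of_mem_nhds (ball_mem_nhds _ (by positivity)), ?_⟩
  have hev := (Metric.tendsto_nhds.1 (hf z hz)) (ε / 4) (by positivity)
  filter_upwards [hev] with n hn y hy
  have hys : y ∈ ball z s := ball_subset_ball (min_le_left _ _) hy
  have hyε : ‖y - z‖ < ε * s / 4 := by
    rw [mem_ball, dist_eq_norm] at hy; exact hy.trans_le (min_le_right _ _)
  have hq : 1 / s * ‖y - z‖ ≤ ε / 4 := by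
    rw [div_mul_eq_mul_div, one_mul, div_le_iff₀ hs0]; linarith
  have a1 := hlip n y hys
  have a2 := hlipf y hys
  rw [dist_eq_norm] at hn ⊢
  have e : f y - F n y = (f y - f z) - (F n z - f z) - (F n y - F n z) := by ring
  rw [e]
  have b1 := norm_sub_le ((f y - f z) - (F n z - f z)) (F n y - F n z)
  have b2 := norm_sub_le (f y - f z) (F n z - f z)
  linarith

/-- The class of maps in the Riemann mapping theorem. -/
structure RMClass (V : Set ℂ) (ψ : ℂ → ℂ) : Prop where
  diff : DifferentiableOn ℂ ψ V
  inj : InjOn ψ V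
  der : ∀ z ∈ V, deriv ψ z ≠ 0
  maps : ∀ z ∈ V, ‖ψ z‖ < 1
  zero : ψ 0 = 0

/-- Moebius map of the disc -/
noncomputable def moeb (c w : ℂ) : ℂ := (w - c) / (1 - (starRingEnd ℂ) c * w)

lemma moeb_den {c w : ℂ} (hc : ‖c‖ < 1) (hw : ‖w‖ < 1) : 1 - (starRingEnd ℂ) c * w ≠ 0 := by
  intro h
  have h1 : (starRingEnd ℂ) c * w = 1 := (sub_eq_zero.1 h).symm
  have h2 : ‖c‖ * ‖w‖ = 1 := by
    have := congrArg norm h1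
    simpa using this
  nlinarith [norm_nonneg c, norm_nonneg w]

lemma moeb_lt {c w : ℂ} (hc : ‖c‖ < 1) (hw : ‖w‖ < 1) : ‖moeb c w‖ < 1 := by
  have hd := moeb_den hc hw
  rw [moeb, norm_div, div_lt_one (norm_pos_iff.2 hd)]
  apply lt_of_pow_lt_pow_left₀ 2 (norm_nonneg _)
  have hc2 : c.re * c.re + c.im * c.im < 1 := by
    rw [← Complex.normSq_apply, Complex.normSq_eq_norm_sq]; nlinarith [norm_nonneg c]
  have hw2 : w.re * w.re + w.im * w.im < 1 := by
    rw [← Complex.normSq_apply, Complex.normSq_eq_norm_sq]; nlinarith [norm_nonneg w]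
  rw [← Complex.normSq_eq_norm_sq, ← Complex.normSq_eq_norm_sq, Complex.normSq_apply,
    Complex.normSq_apply]
  simp
  nlinarith

lemma moeb_inj {c : ℂ} (hc : ‖c‖ < 1) {w w' : ℂ} (hw : ‖w‖ < 1) (hw' : ‖w'‖ < 1)
    (h : moeb c w = moeb c w') : w = w' := by
  have hd := moeb_den hc hw
  have hd' := moeb_den hc hw'
  rw [moeb, moeb, div_eq_div_iff hd hd'] at h
  have h2 : (w - w') * (1 - (starRingEnd ℂ) c * c) = 0 := by linear_combination h
  rcases mul_eq_zero.1 h2 with h3 | h3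
  · exact sub_eq_zero.1 h3
  · exact (moeb_den hc hc h3).elim

lemma moeb_deriv {c w : ℂ} (hc : ‖c‖ < 1) (hw : ‖w‖ < 1) :
    HasDerivAt (moeb c) ((1 - (starRingEnd ℂ) c * c) / (1 - (starRingEnd ℂ) c * w) ^ 2) w := by
  have hd := moeb_den hc hw
  have h1 : HasDerivAt (fun w : ℂ => w - c) 1 w := (hasDerivAt_id w).sub_const c
  have h2 : HasDerivAt (fun w : ℂ => 1 - (starRingEnd ℂ) c * w) (-((starRingEnd ℂ) c * 1)) w :=
    ((hasDerivAt_id w).const_mul _).const_sub 1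
  have := h1.fun_div h2 hd
  refine this.congr_deriv ?_
  congr 1
  ring

lemma hasDerivAt_sqrt {s T : ℂ → ℂ} {z T' : ℂ} (hs : ContinuousAt s z) (h0 : s z ≠ 0)
    (he : ∀ᶠ w in 𝓝 z, s w ^ 2 = T w) (hT : HasDerivAt T T' z) :
    HasDerivAt s (T' / (2 * s z)) z := by
  rw [hasDerivAt_iff_tendsto_slope] at hT ⊢
  have hsum : Tendsto (fun w => s w + s z) (𝓝[≠] z) (𝓝 (2 * s z)) := by
    have : Tendsto (fun w => s w + s z) (𝓝 z) (𝓝 (s z + s z)) := hs.tendsto.add_const _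
    rw [two_mul]
    exact this.mono_left nhdsWithin_le_nhds
  have h2 : (2 * s z) ≠ 0 := by simpa using h0
  refine (hT.div hsum h2).congr' ?_
  have hez : s z ^ 2 = T z := he.self_of_nhds
  filter_upwards [hsum.eventually_ne h2, nhdsWithin_le_nhds he] with w hw hew
  simp only [Pi.div_apply]
  rw [slope_def_field, slope_def_field, ← hew, ← hez]
  rw [div_eq_iff hw, div_mul_eq_mul_div]
  congr 1; ring

lemma rm_improve {V : Set ℂ} (hV : IsOpen V) (hb : IsBounded V) (h0V : (0 : ℂ) ∈ V)
    (hVp : IsPreconnected V) (hVc : IsPreconnected Vᶜ) {ψ : ℂ → ℂ} (hψ : RMClass V ψ)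
    {c : ℂ} (hc : ‖c‖ < 1) (hcV : c ∉ ψ '' V) :
    ∃ k, RMClass V k ∧ ‖deriv ψ 0‖ < ‖deriv k 0‖ := by
  have hlog1 := hasLogOn_of_inj hV hb hVp hVc hψ.diff.continuousOn hψ.inj
    (open_image_of_deriv_ne_zero hV hψ.diff hψ.der) hcV
  have hlog2 : HasLogOn (fun z => 1 - (starRingEnd ℂ) c * ψ z) V := by
    have := hψ.diff.continuousOn
    apply hasLogOn_of_near_one (by fun_prop)
    intro z hz
    have h1 := hψ.maps z hz
    have : ‖1 - (starRingEnd ℂ) c * ψ z - 1‖ = ‖c‖ * ‖ψ z‖ := by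
      rw [show 1 - (starRingEnd ℂ) c * ψ z - 1 = -((starRingEnd ℂ) c * ψ z) by ring]
      simp
    rw [this]
    nlinarith [norm_nonneg c, norm_nonneg (ψ z)]
  obtain ⟨g, hgc, hge⟩ := hlog1.mul hlog2.inv
  let s : ℂ → ℂ := fun z => Complex.exp (g z / 2)
  have hs0 : ∀ z, s z ≠ 0 := fun z => Complex.exp_ne_zero _
  have hsq : ∀ z ∈ V, s z ^ 2 = moeb c (ψ z) := by
    intro z hz
    have e1 : s z ^ 2 = Complex.exp (g z) := by
      simp only [s]
      rw [← Complex.exp_nat_mul]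
      congr 1
      push_cast; ring
    rw [e1, hge z hz]
    exact (div_eq_mul_inv _ _).symm
  have hsc : ContinuousOn s V := by
    simp only [s]; fun_prop
  have hsd : ∀ z ∈ V, HasDerivAt s
      ((1 - (starRingEnd ℂ) c * c) / (1 - (starRingEnd ℂ) c * ψ z) ^ 2 * deriv ψ z / (2 * s z)) z := by
    intro z hz
    apply hasDerivAt_sqrt (T := fun z => moeb c (ψ z)) (hsc.continuousAt (hV.mem_nhds hz)) (hs0 z)
    · filter_upwards [hV.mem_nhds hz] with w hw using hsq w hw
    · exact (moeb_deriv hc (hψ.maps z hz)).comp z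
        (hψ.diff.differentiableAt (hV.mem_nhds hz)).hasDerivAt
  have hslt : ∀ z ∈ V, ‖s z‖ < 1 := by
    intro z hz
    have := moeb_lt hc (hψ.maps z hz)
    rw [← hsq z hz, norm_pow] at this
    by_contra h
    push Not at h
    nlinarith
  set s0 := s 0 with hs0'
  have hs0lt := hslt 0 h0V
  have hcc : 1 - (starRingEnd ℂ) c * c ≠ 0 := moeb_den hc hc
  have hkd : ∀ z ∈ V, HasDerivAt (fun z => moeb s0 (s z))
      ((1 - (starRingEnd ℂ) s0 * s0) / (1 - (starRingEnd ℂ) s0 * s z) ^ 2 *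
      ((1 - (starRingEnd ℂ) c * c) / (1 - (starRingEnd ℂ) c * ψ z) ^ 2 * deriv ψ z / (2 * s z))) z :=
    fun z hz => (moeb_deriv hs0lt (hslt z hz)).comp z (hsd z hz)
  refine ⟨fun z => moeb s0 (s z), ⟨?_, ?_, ?_, ?_, ?_⟩, ?_⟩
  · intro z hz
    exact (hkd z hz).differentiableAt.differentiableWithinAt
  · intro z hz w hw h
    have h1 := moeb_inj hs0lt (hslt z hz) (hslt w hw) h
    apply hψ.inj hz hw
    apply moeb_inj hc (hψ.maps z hz) (hψ.maps w hw)
    rw [← hsq z hz, ← hsq w hw, h1]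
  · intro z hz
    rw [(hkd z hz).deriv]
    have a1 := moeb_den hs0lt hs0lt
    have a2 := moeb_den hs0lt (hslt z hz)
    have a3 := moeb_den hc (hψ.maps z hz)
    have a4 := hψ.der z hz
    have a5 := hs0 z
    exact mul_ne_zero (div_ne_zero a1 (pow_ne_zero 2 a2)) (div_ne_zero (mul_ne_zero (div_ne_zero hcc (pow_ne_zero 2 a3)) a4) (mul_ne_zero two_ne_zero a5))
  · intro z hz
    exact moeb_lt hs0lt (hslt z hz)
  · simp [moeb, s0]
  · rw [(hkd 0 h0V).deriv]
    have hψ0 := norm_pos_iff.2 (hψ.der 0 h0V)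
    have e0 := hsq 0 h0V
    rw [hψ.zero] at e0 ⊢
    have hcs : s0 ^ 2 = -c := by rw [hs0', e0]; simp [moeb]
    rw [← hs0']
    set t := ‖s0‖ with ht
    have htpos : 0 < t := norm_pos_iff.2 (hs0 0)
    have hct : ‖c‖ = t ^ 2 := by
      have := congrArg norm hcs
      rw [norm_pow, norm_neg] at this
      exact this.symm
    have n1 : ‖1 - (starRingEnd ℂ) s0 * s0‖ = 1 - t ^ 2 := by
      rw [← Complex.normSq_eq_conj_mul_self, Complex.normSq_eq_norm_sq, ← ht,
        ← Complex.ofReal_one, ← Complex.ofReal_sub, Complex.norm_real, Real.norm_eq_abs,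
        abs_of_pos]
      nlinarith
    have n2 : ‖1 - (starRingEnd ℂ) c * c‖ = 1 - t ^ 4 := by
      rw [← Complex.normSq_eq_conj_mul_self, Complex.normSq_eq_norm_sq, hct,
        ← Complex.ofReal_one, ← Complex.ofReal_sub, Complex.norm_real, Real.norm_eq_abs,
        abs_of_pos]
      · ring
      · rw [hct] at hc; nlinarith [sq_nonneg t]
    simp only [norm_mul, norm_div, norm_pow, mul_zero, sub_zero, norm_one, n1, n2, ← ht]
    have h2 : ‖(2 : ℂ)‖ = 2 := by simp
    rw [h2]
    have hpos : 0 < 1 - t ^ 2 := by nlinarith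
    have : (1 - t ^ 2) / (1 - t ^ 2) ^ 2 * ((1 - t ^ 4) / 1 ^ 2 * ‖deriv ψ 0‖ / (2 * t)) =
      (1 + t ^ 2) / (2 * t) * ‖deriv ψ 0‖ := by
      field_simp
      ring
    rw [this]
    have h3 : 1 < (1 + t ^ 2) / (2 * t) := by
      rw [lt_div_iff₀ (by positivity)]
      have : 0 < (1 - t) ^ 2 := by
        have : 0 < 1 - t := by linarith
        positivity
      nlinarith
    nlinarith

/-- Riemann mapping theorem -/
lemma riemann_mapping {V : Set ℂ} (hV : IsOpen V) (hb : IsBounded V) (h0V : (0 : ℂ) ∈ V)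
    (hVp : IsPreconnected V) (hVc : IsPreconnected Vᶜ) :
    ∃ ψ, RMClass V ψ ∧ ψ '' V = ball 0 1 := by
  obtain ⟨r, hr, hrV⟩ := Metric.nhds_basis_closedBall.mem_iff.1 (hV.mem_nhds h0V)
  obtain ⟨R, hR0, hR⟩ := hb.subset_ball_lt 0 (0 : ℂ)
  set S : Set ℝ := {x | ∃ ψ, RMClass V ψ ∧ ‖deriv ψ 0‖ = x} with hS
  have hψ0 : RMClass V (fun z => z / R) := by
    have hRc : (R : ℂ) ≠ 0 := by exact_mod_cast hR0.ne'
    refine ⟨by fun_prop, ?_, ?_, ?_, by simp⟩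
    · intro z _ w _ h
      simpa [hRc] using h
    · intro z _
      simp [hRc]
    · intro z hz
      have := hR hz
      simp only [mem_ball, dist_zero_right] at this
      rw [norm_div, Complex.norm_real, Real.norm_eq_abs, abs_of_pos hR0]
      rwa [div_lt_one hR0]
  have hSne : S.Nonempty := ⟨_, _, hψ0, rfl⟩
  have hSb : BddAbove S := by
    refine ⟨1 / r, ?_⟩
    rintro _ ⟨ψ, hψ, rfl⟩
    apply Complex.norm_deriv_le_of_forall_mem_sphere_norm_le hr
    · apply DifferentiableOn.diffContOnCl
      rw [closure_ball _ hr.ne']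
      exact hψ.diff.mono hrV
    · intro y hy
      exact (hψ.maps y (hrV (sphere_subset_closedBall hy))).le
  obtain ⟨u, -, hut, huS⟩ := exists_seq_tendsto_sSup hSne hSb
  choose F hF hFu using huS
  obtain ⟨f, hf⟩ := exists_ultralimit hV (fun n => (hF n).diff) (fun n z hz => ((hF n).maps z hz).le)
  have hfd : DifferentiableOn ℂ f V := hf.differentiableOn (.of_forall fun n => (hF n).diff) hV
  have hfder : TendstoLocallyUniformlyOn (fun n => deriv (F n)) (deriv f)
    (hyperfilter ℕ : Filter ℕ) V := hf.deriv (.of_forall fun n => (hF n).diff) hV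
  have hpt : ∀ z ∈ V, Tendsto (fun n => F n z) (hyperfilter ℕ : Filter ℕ) (𝓝 (f z)) :=
    fun z hz => hf.tendsto_at hz
  have hle : (hyperfilter ℕ : Filter ℕ) ≤ atTop := by
    rw [← Nat.cofinite_eq_atTop]; exact hyperfilter_le_cofinite
  have hM : ‖deriv f 0‖ = sSup S := by
    refine tendsto_nhds_unique (hfder.tendsto_at h0V).norm ?_
    simp only [hFu]
    exact hut.mono_left hle
  have hMpos : 0 < ‖deriv f 0‖ := by
    rw [hM]
    exact (norm_pos_iff.2 (hψ0.der 0 h0V)).trans_le (le_csSup hSb ⟨_, hψ0, rfl⟩)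
  have hd0 : ∀ z ∈ V, deriv f z ≠ 0 := by
    intro z hz h
    have hev := hurwitz_local hV (fun n => (hF n).diff.deriv hV) (fun n => (hF n).der) hfder hz h
    have han : AnalyticOnNhd ℂ (deriv f) V := (hfd.deriv hV).analyticOnNhd hV
    have := han.eqOn_zero_of_preconnected_of_eventuallyEq_zero hVp hz hev h0V
    simp only [Pi.zero_apply] at this
    rw [this] at hMpos
    simp at hMpos
  have hopen := open_image_of_deriv_ne_zero hV hfd hd0
  have hfc : RMClass V f := by
    refine ⟨hfd, ?_, hd0, ?_, ?_⟩
    · intro a ha b hbV hab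
      by_contra hne
      have hO : IsOpen (V \ {b}) := hV.sdiff isClosed_singleton
      have hlim : TendstoLocallyUniformlyOn (fun n z => F n z - F n b) (fun z => f z - f b)
          (hyperfilter ℕ : Filter ℕ) (V \ {b}) := by
        rw [Metric.tendstoLocallyUniformlyOn_iff]
        intro ε hε x hx
        obtain ⟨t, ht, hev⟩ := (Metric.tendstoLocallyUniformlyOn_iff.1 (hf.mono sdiff_subset))
          (ε / 2) (by positivity) x hx
        refine ⟨t, ht, ?_⟩
        filter_upwards [hev, Metric.tendsto_nhds.1 (hpt b hbV) (ε / 2) (by positivity)] with n h1 h2 y hy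
        have h3 := h1 y hy
        rw [dist_eq_norm] at h2 h3 ⊢
        have : f y - f b - (F n y - F n b) = (f y - F n y) + (F n b - f b) := by ring
        rw [this]
        exact (norm_add_le _ _).trans_lt (by linarith)
      have hev := hurwitz_local hO (fun n => (((hF n).diff).mono sdiff_subset).sub_const _)
        (fun n z hz h => hz.2 ((hF n).inj hz.1 hbV (sub_eq_zero.1 h))) hlim
        (show a ∈ V \ {b} from ⟨ha, hne⟩) (sub_eq_zero.2 hab)
      have : f =ᶠ[𝓝 a] fun _ => f b := by
        filter_upwards [hev] with z hz using sub_eq_zero.1 hz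
      apply hd0 a ha
      rw [this.deriv_eq]; simp
    · have hcl : f '' V ⊆ closedBall 0 1 := by
        rintro _ ⟨z, hz, rfl⟩
        rw [mem_closedBall, dist_zero_right]
        exact le_of_tendsto (hpt z hz).norm (.of_forall fun n => ((hF n).maps z hz).le)
      have : f '' V ⊆ interior (closedBall 0 1) := interior_maximal hcl (hopen V subset_rfl hV)
      rw [interior_closedBall _ one_ne_zero] at this
      intro z hz
      simpa using this ⟨z, hz, rfl⟩
    · refine tendsto_nhds_unique (hpt 0 h0V) ?_
      simp only [(hF _).zero]
      exact tendsto_const_nhds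
  refine ⟨f, hfc, subset_antisymm ?_ ?_⟩
  · rintro _ ⟨z, hz, rfl⟩
    simpa using hfc.maps z hz
  · intro c hc
    by_contra hcV
    obtain ⟨k, hk, hlt⟩ := rm_improve hV hb h0V hVp hVc hfc (by simpa using hc) hcV
    rw [hM] at hlt
    exact absurd (le_csSup hSb ⟨k, hk, rfl⟩) (not_le.2 hlt)

open Set Metric Bornology Filter Topology

lemma area_formula {Ω : Set ℂ} (hΩ : IsOpen Ω) {g : ℂ → ℂ} (hg : DifferentiableOn ℂ g Ω)
    (hinj : InjOn g Ω) :
    ∫⁻ z in Ω, ENNReal.ofReal (‖deriv g z‖ ^ 2) = MeasureTheory.volume (g '' Ω) := by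
  have h := MeasureTheory.lintegral_abs_det_fderiv_eq_addHaar_image MeasureTheory.volume
    hΩ.measurableSet (f := g) (f' := fun z => (fderiv ℂ g z).restrictScalars ℝ)
    (fun z hz => ((hg.differentiableAt (hΩ.mem_nhds hz)).hasFDerivAt.restrictScalars
      ℝ).hasFDerivWithinAt) hinj
  rw [← h]
  refine MeasureTheory.setLIntegral_congr_fun hΩ.measurableSet (fun z _ => ?_)
  congr 1
  have : ((fderiv ℂ g z).restrictScalars ℝ).det = Complex.normSq (deriv g z) := by
    have e : ((fderiv ℂ g z).restrictScalars ℝ).det =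
        LinearMap.det (((fderiv ℂ g z) : ℂ →ₗ[ℂ] ℂ).restrictScalars ℝ) := rfl
    rw [e, LinearMap.det_restrictScalars]
    simp [LinearMap.det_ring, Algebra.norm_complex_apply]
  simp only [this, Complex.normSq_eq_norm_sq, abs_pow, abs_norm]

lemma arc_bound {Ω : Set ℂ} (hΩ : IsOpen Ω) {g : ℂ → ℂ} (hg : DifferentiableOn ℂ g Ω)
    {r δ t1 t2 : ℝ} (hr : 0 < r) (hδ : 0 < δ) (h12 : t1 ≤ t2) (h2π : t2 - t1 ≤ 2 * Real.pi)
    (hm : ∀ t ∈ Icc t1 t2, (r : ℂ) * Complex.exp (t * Complex.I) ∈ Ω)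
    (hd : δ ≤ ‖g (r * Complex.exp (t2 * Complex.I)) - g (r * Complex.exp (t1 * Complex.I))‖) :
    ENNReal.ofReal (δ ^ 2 / (2 * Real.pi)) ≤
      ∫⁻ t in Ioc t1 t2, ENNReal.ofReal (r ^ 2 * ‖deriv g (r * Complex.exp (t * Complex.I))‖ ^ 2) := by
  have hπ := Real.pi_pos
  set c : ℝ → ℂ := fun t => r * Complex.exp (t * Complex.I) with hc
  have hcc : Continuous c := by simp only [hc]; fun_prop
  have hdc : ContinuousOn (deriv g) Ω := (hg.deriv hΩ).continuousOn
  have hcd : ∀ t : ℝ, HasDerivAt c (r * (Complex.exp (t * Complex.I) * Complex.I)) t := by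
    intro t
    have h1 : HasDerivAt (fun t : ℝ => (t : ℂ) * Complex.I) Complex.I t := by
      simpa using (Complex.ofRealCLM.hasDerivAt (x := t)).mul_const Complex.I
    exact (h1.cexp).const_mul _
  have hgd : ∀ t ∈ uIcc t1 t2, HasDerivAt (fun t => g (c t))
      (deriv g (c t) * (r * (Complex.exp (t * Complex.I) * Complex.I))) t := by
    intro t ht
    rw [uIcc_of_le h12] at ht
    exact HasDerivAt.comp t (hg.differentiableAt (hΩ.mem_nhds (hm t ht))).hasDerivAt (hcd t)
  have hcont1 : ContinuousOn (fun t => deriv g (c t)) (uIcc t1 t2) := by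
    rw [uIcc_of_le h12]
    exact hdc.comp hcc.continuousOn hm
  have hcont2 : ContinuousOn (fun t : ℝ => deriv g (c t) * (r * (Complex.exp (t * Complex.I) * Complex.I)))
      (uIcc t1 t2) := by
    refine hcont1.mul ?_
    fun_prop
  have hcont3 : ContinuousOn (fun t : ℝ => r ^ 2 * ‖deriv g (c t)‖ ^ 2) (uIcc t1 t2) := by
    fun_prop
  have hintg := intervalIntegral.integral_eq_sub_of_hasDerivAt hgd hcont2.intervalIntegrable
  have hb : δ ≤ ∫ t in t1..t2, ((Real.pi / δ) * (r ^ 2 * ‖deriv g (c t)‖ ^ 2) + δ / (4 * Real.pi)) := by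
    calc δ ≤ _ := hd
      _ = ‖∫ t in t1..t2, deriv g (c t) * (r * (Complex.exp (t * Complex.I) * Complex.I))‖ := by
          rw [hintg]
      _ ≤ _ := by
          apply intervalIntegral.norm_integral_le_of_norm_le h12
          · refine Filter.Eventually.of_forall (fun t _ => ?_)
            rw [norm_mul, norm_mul, norm_mul, Complex.norm_exp_ofReal_mul_I, Complex.norm_I,
              Complex.norm_real, Real.norm_of_nonneg hr.le]
            set x := ‖deriv g (c t)‖
            have : 0 ≤ (Real.pi / δ) * (r * x - δ / (2 * Real.pi)) ^ 2 := by positivity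
            have e : (Real.pi / δ) * (r * x - δ / (2 * Real.pi)) ^ 2
              = (Real.pi / δ) * (r ^ 2 * x ^ 2) + δ / (4 * Real.pi) - x * (r * (1 * 1)) := by
              field_simp; ring
            linarith
          · apply ContinuousOn.intervalIntegrable
            fun_prop
  rw [intervalIntegral.integral_add (by apply ContinuousOn.intervalIntegrable; fun_prop) (by simp),
    intervalIntegral.integral_const_mul, intervalIntegral.integral_const] at hb
  have hs : (t2 - t1) • (δ / (4 * Real.pi)) ≤ δ / 2 := by
    have : (t2 - t1) * (δ / (4 * Real.pi)) ≤ (2 * Real.pi) * (δ / (4 * Real.pi)) := by gcongr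
    have e : (2 * Real.pi) * (δ / (4 * Real.pi)) = δ / 2 := by field_simp; ring
    simp only [smul_eq_mul]; linarith
  have hfin : δ ^ 2 / (2 * Real.pi) ≤ ∫ t in t1..t2, r ^ 2 * ‖deriv g (c t)‖ ^ 2 := by
    set J := ∫ t in t1..t2, r ^ 2 * ‖deriv g (c t)‖ ^ 2
    have h3 : δ / 2 ≤ Real.pi / δ * J := by linarith
    have h4 : (δ / Real.pi) * (δ / 2) ≤ (δ / Real.pi) * (Real.pi / δ * J) := by gcongr
    have e1 : (δ / Real.pi) * (Real.pi / δ * J) = J := by field_simp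
    have e2 : (δ / Real.pi) * (δ / 2) = δ ^ 2 / (2 * Real.pi) := by field_simp
    linarith
  refine (ENNReal.ofReal_le_ofReal hfin).trans ?_
  rw [intervalIntegral.integral_of_le h12]
  rw [MeasureTheory.ofReal_integral_eq_lintegral_ofReal]
  · exact (intervalIntegrable_iff_integrableOn_Ioc_of_le h12).1 hcont3.intervalIntegrable
  · exact Filter.Eventually.of_forall (fun t => by positivity)

lemma lintegral_inv_top {ρ c : ℝ} (hρ : 0 < ρ) (hc : 0 < c) :
    ∫⁻ r in Ioo 0 ρ, ENNReal.ofReal (c / r) = ⊤ := by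
  by_contra h
  have h1 : MeasureTheory.IntegrableOn (fun r : ℝ => c / r) (Ioo 0 ρ) := by
    refine ⟨by fun_prop, ?_⟩
    rw [MeasureTheory.hasFiniteIntegral_iff_ofReal]
    · exact lt_top_iff_ne_top.2 h
    · exact (MeasureTheory.ae_restrict_iff' measurableSet_Ioo).2
        (Filter.Eventually.of_forall fun r hr => div_nonneg hc.le hr.1.le)
  have h2 : IntervalIntegrable (fun r : ℝ => r⁻¹) MeasureTheory.volume 0 ρ := by
    rw [intervalIntegrable_iff_integrableOn_Ioo_of_le hρ.le]
    have := h1.const_mul c⁻¹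
    refine this.congr ?_
    refine Filter.Eventually.of_forall fun r => ?_
    field_simp
  rw [intervalIntegrable_inv_iff] at h2
  rcases h2 with h2 | h2
  · exact hρ.ne h2
  · exact h2 (by simp)

lemma length_area_one {g : ℂ → ℂ} (hg : DifferentiableOn ℂ g (ball 1 1))
    (hinj : InjOn g (ball 1 1)) (hb : IsBounded (g '' ball 1 1)) {δ ρ : ℝ} (hδ : 0 < δ) (hρ : 0 < ρ) :
    ∃ r, 0 < r ∧ r < ρ ∧ ∀ z ∈ ball (1:ℂ) 1, ∀ w ∈ ball (1:ℂ) 1, ‖z‖ = r → ‖w‖ = r →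
      dist (g z) (g w) < δ := by
  classical
  by_contra hcon
  push Not at hcon
  have hπ := Real.pi_pos
  set Ω : Set ℂ := ball 1 1 with hΩd
  have hΩ : IsOpen Ω := isOpen_ball
  have hmem : ∀ r t : ℝ, 0 < r → ((r : ℂ) * Complex.exp (t * Complex.I) ∈ Ω ↔ r / 2 < Real.cos t) := by
    intro r t hr
    rw [hΩd, mem_ball, Complex.dist_eq, ← sq_lt_one_iff₀ (norm_nonneg _), ← Complex.normSq_eq_norm_sq]
    have : Complex.normSq ((r : ℂ) * Complex.exp (t * Complex.I) - 1) = r ^ 2 - 2 * r * Real.cos t + 1 := by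
      rw [Complex.exp_mul_I, ← Complex.ofReal_cos, ← Complex.ofReal_sin, Complex.normSq_apply]
      have e1 : ((r : ℂ) * ((Real.cos t : ℂ) + (Real.sin t : ℂ) * Complex.I) - 1).re = r * Real.cos t - 1 := by
        simp [-Complex.ofReal_cos, -Complex.ofReal_sin]
      have e2 : ((r : ℂ) * ((Real.cos t : ℂ) + (Real.sin t : ℂ) * Complex.I) - 1).im = r * Real.sin t := by
        simp [-Complex.ofReal_cos, -Complex.ofReal_sin]
      rw [e1, e2]
      linear_combination r ^ 2 * Real.sin_sq_add_cos_sq t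
    rw [this]
    constructor
    · intro h; nlinarith
    · intro h; nlinarith
  have hord : ∀ r t1 t2 t : ℝ, 0 < r → t1 ∈ Ioc (-Real.pi) Real.pi → t2 ∈ Ioc (-Real.pi) Real.pi →
      r / 2 < Real.cos t1 → r / 2 < Real.cos t2 → t ∈ Icc t1 t2 → r / 2 < Real.cos t := by
    intro r t1 t2 t hr h1 h2 c1 c2 ht
    rcases le_total 0 t with h0 | h0
    · exact c2.trans_le (Real.cos_le_cos_of_nonneg_of_le_pi h0 h2.2 ht.2)
    · rw [← Real.cos_neg t]
      rw [← Real.cos_neg t1] at c1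
      exact c1.trans_le (Real.cos_le_cos_of_nonneg_of_le_pi (by linarith) (by linarith [h1.1])
        (by linarith [ht.1]))
  set f : ℂ → ENNReal := Ω.indicator (fun z => ENNReal.ofReal (‖deriv g z‖ ^ 2)) with hf
  have hfm : Measurable f := by
    apply Measurable.indicator _ hΩ.measurableSet
    have := measurable_deriv g
    fun_prop
  have hpoint : ∀ r ∈ Ioo 0 ρ, ENNReal.ofReal (δ ^ 2 / (2 * Real.pi) / r) ≤
      ∫⁻ t in Ioo (-Real.pi) Real.pi, ENNReal.ofReal r • f (Complex.polarCoord.symm (r, t)) := by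
    intro r hr
    obtain ⟨z, hz, w, hw, hzr, hwr, hd⟩ := hcon r hr.1 hr.2
    -- general claim
    have key : ∀ z ∈ Ω, ∀ w ∈ Ω, ‖z‖ = r → ‖w‖ = r → δ ≤ dist (g z) (g w) → z.arg ≤ w.arg →
      ENNReal.ofReal (δ ^ 2 / (2 * Real.pi) / r) ≤
      ∫⁻ t in Ioo (-Real.pi) Real.pi, ENNReal.ofReal r • f (Complex.polarCoord.symm (r, t)) := by
      intro z hz w hw hzr hwr hd hle
      have ez : (r : ℂ) * Complex.exp (z.arg * Complex.I) = z := by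
        rw [← hzr]; exact Complex.norm_mul_exp_arg_mul_I z
      have ew : (r : ℂ) * Complex.exp (w.arg * Complex.I) = w := by
        rw [← hwr]; exact Complex.norm_mul_exp_arg_mul_I w
      have hzI := Complex.arg_mem_Ioc z
      have hwI := Complex.arg_mem_Ioc w
      have cz := (hmem r z.arg hr.1).1 (by rw [ez]; exact hz)
      have cw := (hmem r w.arg hr.1).1 (by rw [ew]; exact hw)
      have hm : ∀ t ∈ Icc z.arg w.arg, (r : ℂ) * Complex.exp (t * Complex.I) ∈ Ω := fun t ht =>
        (hmem r t hr.1).2 (hord r _ _ t hr.1 hzI hwI cz cw ht)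
      have hab := arc_bound hΩ hg hr.1 hδ hle (by linarith [hzI.1, hwI.2]) hm (by
        rw [ez, ew, ← dist_eq_norm, dist_comm]; exact hd)
      have hwlt : w.arg < Real.pi := by
        refine lt_of_le_of_ne hwI.2 (fun h => ?_)
        rw [h, Real.cos_pi] at cw
        linarith [hr.1]
      calc ENNReal.ofReal (δ ^ 2 / (2 * Real.pi) / r)
          = ENNReal.ofReal r⁻¹ * ENNReal.ofReal (δ ^ 2 / (2 * Real.pi)) := by
            rw [← ENNReal.ofReal_mul (inv_nonneg.2 hr.1.le)]; congr 1; ring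
        _ ≤ ENNReal.ofReal r⁻¹ * ∫⁻ t in Ioc z.arg w.arg,
              ENNReal.ofReal (r ^ 2 * ‖deriv g (r * Complex.exp (t * Complex.I))‖ ^ 2) := by gcongr
        _ = ∫⁻ t in Ioc z.arg w.arg, ENNReal.ofReal r⁻¹ * 
              ENNReal.ofReal (r ^ 2 * ‖deriv g (r * Complex.exp (t * Complex.I))‖ ^ 2) := by
            rw [MeasureTheory.lintegral_const_mul' _ _ ENNReal.ofReal_ne_top]
        _ = ∫⁻ t in Ioc z.arg w.arg, ENNReal.ofReal r • f (Complex.polarCoord.symm (r, t)) := by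
            refine MeasureTheory.setLIntegral_congr_fun measurableSet_Ioc (fun t ht => ?_)
            have e : Complex.polarCoord.symm (r, t) = r * Complex.exp (t * Complex.I) := by
              rw [Complex.polarCoord_symm_apply, Complex.exp_mul_I]; simp
            simp only [e, hf]
            rw [indicator_of_mem (hm t ⟨ht.1.le, ht.2⟩), smul_eq_mul,
              ← ENNReal.ofReal_mul (inv_nonneg.2 hr.1.le), ← ENNReal.ofReal_mul hr.1.le]
            congr 1
            have := hr.1.ne'
            field_simp
        _ ≤ _ := by
            apply MeasureTheory.lintegral_mono_set
            intro t ht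
            exact ⟨hzI.1.trans ht.1, ht.2.trans_lt hwlt⟩
    rcases le_total z.arg w.arg with h | h
    · exact key z hz w hw hzr hwr hd h
    · exact key w hw z hz hwr hzr (by rwa [dist_comm]) h
  have htop : (⊤ : ENNReal) ≤ ∫⁻ z, f z := by
    rw [← Complex.lintegral_comp_polarCoord_symm]
    rw [polarCoord_target, MeasureTheory.Measure.volume_eq_prod, MeasureTheory.setLIntegral_prod]
    · rw [← lintegral_inv_top hρ (c := δ ^ 2 / (2 * Real.pi)) (by positivity)]
      refine (MeasureTheory.setLIntegral_mono' measurableSet_Ioo hpoint).trans ?_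
      apply MeasureTheory.lintegral_mono_set
      exact Ioo_subset_Ioi_self
    · apply Measurable.aemeasurable
      have : Measurable (fun p : ℝ × ℝ => Complex.polarCoord.symm p) := by
        simp only [Complex.polarCoord_symm_apply]
        fun_prop
      have h2 := hfm.comp this
      simp only [smul_eq_mul]
      exact (by fun_prop : Measurable fun p : ℝ × ℝ => ENNReal.ofReal p.1).mul h2
  have harea : ∫⁻ z, f z = MeasureTheory.volume (g '' Ω) := by
    rw [← area_formula hΩ hg hinj, hf, MeasureTheory.lintegral_indicator hΩ.measurableSet]
  rw [harea] at htop
  exact absurd (top_le_iff.1 htop) hb.measure_lt_top.ne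

lemma length_area {f : ℂ → ℂ} (hf : DifferentiableOn ℂ f (ball 0 1))
    (hinj : InjOn f (ball 0 1)) (hb : IsBounded (f '' ball 0 1)) {ζ : ℂ} (hζ : ‖ζ‖ = 1)
    {δ ρ : ℝ} (hδ : 0 < δ) (hρ : 0 < ρ) :
    ∃ r, 0 < r ∧ r < ρ ∧ ∀ z ∈ ball (0:ℂ) 1, ∀ w ∈ ball (0:ℂ) 1, dist z ζ = r → dist w ζ = r →
      dist (f z) (f w) < δ := by
  have hζ0 : ζ ≠ 0 := by rintro rfl; simp at hζ
  have hmaps : MapsTo (fun z => ζ * (1 - z)) (ball 1 1) (ball 0 1) := by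
    intro z hz
    simpa [hζ, dist_eq_norm, norm_sub_rev] using hz
  obtain ⟨r, hr, hrρ, h⟩ := length_area_one (g := fun z => f (ζ * (1 - z)))
    (hf.comp (by fun_prop) hmaps)
    (fun a ha b hb' hab => by
      have := hinj (hmaps ha) (hmaps hb') hab
      have := mul_left_cancel₀ hζ0 this
      simpa using this)
    (hb.subset (by rintro _ ⟨z, hz, rfl⟩; exact ⟨_, hmaps hz, rfl⟩)) hδ hρ
  refine ⟨r, hr, hrρ, fun z hz w hw hzr hwr => ?_⟩
  have e : ∀ z, ζ * (1 - (1 - z / ζ)) = z := by intro z; field_simp; ring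
  have e2 : ∀ z : ℂ, ‖1 - z / ζ‖ = dist z ζ := by
    intro z
    rw [dist_comm, dist_eq_norm, show ζ - z = ζ * (1 - z / ζ) by field_simp, norm_mul, hζ, one_mul]
  have e3 : ∀ z ∈ ball (0:ℂ) 1, 1 - z / ζ ∈ ball (1:ℂ) 1 := by
    intro z hz
    simpa [dist_eq_norm, hζ] using hz
  have := h (1 - z / ζ) (e3 z hz) (1 - w / ζ) (e3 w hw) (by rw [e2, hzr]) (by rw [e2, hwr])
  simpa only [e] using this

open Set Metric Bornology Filter Topology

/-- The unbounded complementary component of `K`. -/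
def outer (K : Set ℂ) : Set ℂ := {z | z ∉ K ∧ ¬ IsBounded (connectedComponentIn Kᶜ z)}

lemma far_point (R : ℝ) : ∃ q : ℂ, q ∈ (closedBall (0 : ℂ) R)ᶜ := by
  refine ⟨((|R| + 1 : ℝ) : ℂ), ?_⟩
  simp only [mem_compl_iff, mem_closedBall, dist_zero_right, Complex.norm_real, Real.norm_eq_abs]
  rw [abs_of_pos (by positivity)]; linarith [le_abs_self R]

lemma far_not_bounded (R : ℝ) : ¬ IsBounded ((closedBall (0 : ℂ) R)ᶜ) := by
  intro h
  have := h.union (isBounded_closedBall (x := (0:ℂ)) (r := R))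
  rw [compl_union_self] at this
  exact NormedSpace.unbounded_univ ℝ ℂ this

lemma outer_eq {K : Set ℂ} (hK : IsCompact K) : ∃ R, 0 < R ∧ K ⊆ closedBall 0 R ∧
    (closedBall 0 R)ᶜ ⊆ outer K ∧ ∀ q ∈ (closedBall (0 : ℂ) R)ᶜ, outer K = connectedComponentIn Kᶜ q := by
  obtain ⟨R, hR0, hR⟩ := hK.isBounded.subset_closedBall_lt 0 (0 : ℂ)
  have hs : (closedBall (0 : ℂ) R)ᶜ ⊆ Kᶜ := compl_subset_compl.2 hR
  have hub : ∀ q ∈ (closedBall (0 : ℂ) R)ᶜ, ¬ IsBounded (connectedComponentIn Kᶜ q) := by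
    intro q hq hb
    exact far_not_bounded R (hb.subset ((far_connected hR0).subset_connectedComponentIn hq hs))
  refine ⟨R, hR0, hR, fun q hq => ⟨hs hq, hub q hq⟩, fun q hq => ?_⟩
  ext z
  constructor
  · rintro ⟨hz, hzb⟩
    rw [unbounded_comp_eq hK (hub q hq) hzb]
    exact mem_connectedComponentIn hz
  · intro hz
    refine ⟨connectedComponentIn_subset _ _ hz, ?_⟩
    rw [← connectedComponentIn_eq hz]
    exact hub q hq

lemma outer_open {K : Set ℂ} (hK : IsCompact K) : IsOpen (outer K) := by
  obtain ⟨R, -, -, -, h⟩ := outer_eq hK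
  obtain ⟨q, hq⟩ := far_point R
  rw [h q hq]
  exact hK.isClosed.isOpen_compl.connectedComponentIn

lemma outer_preconn {K : Set ℂ} (hK : IsCompact K) : IsPreconnected (outer K) := by
  obtain ⟨R, -, -, -, h⟩ := outer_eq hK
  obtain ⟨q, hq⟩ := far_point R
  rw [h q hq]
  exact isPreconnected_connectedComponentIn

lemma outer_frontier {K : Set ℂ} (hK : IsCompact K) : frontier (outer K) ⊆ K := by
  obtain ⟨R, -, -, -, h⟩ := outer_eq hK
  obtain ⟨q, hq⟩ := far_point R
  rw [h q hq]
  exact frontier_component_subset hK.isClosed q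

lemma outer_compl_preconn {K : Set ℂ} (hK : IsCompact K) (hKc : IsPreconnected K) {x0 : ℂ}
    (hx0 : x0 ∈ K) : IsPreconnected (outer K)ᶜ := by
  refine isPreconnected_of_forall x0 ?_
  intro z hz
  have hKs : K ⊆ (outer K)ᶜ := fun x hx h => h.1 hx
  by_cases hzK : z ∈ K
  · exact ⟨K, hKs, hx0, hzK, hKc⟩
  have hb : IsBounded (connectedComponentIn Kᶜ z) := by
    by_contra h; exact hz ⟨hzK, h⟩
  set C := connectedComponentIn Kᶜ z with hC
  have hCo : IsOpen C := hK.isClosed.isOpen_compl.connectedComponentIn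
  have hzC : z ∈ C := mem_connectedComponentIn hzK
  have hCU : C ⊆ (outer K)ᶜ := by
    intro w hw h
    apply h.2
    rw [← connectedComponentIn_eq hw]
    exact hb
  have hfr : frontier C ⊆ K := frontier_component_subset hK.isClosed z
  have hcl : closure C ⊆ C ∪ frontier C := by
    rw [closure_eq_self_union_frontier]
  have hne : (frontier C).Nonempty := by
    by_contra hne
    rw [not_nonempty_iff_eq_empty, frontier_eq_empty_iff] at hne
    rcases hne with h | h
    · rw [h] at hzC; exact hzC
    · rw [h] at hb
      exact NormedSpace.unbounded_univ ℝ ℂ hb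
  obtain ⟨y, hy⟩ := hne
  refine ⟨K ∪ closure C, union_subset hKs (hcl.trans (union_subset hCU (hfr.trans hKs))),
    Or.inl hx0, Or.inr (subset_closure hzC), ?_⟩
  exact IsPreconnected.union y (hfr hy) (frontier_subset_closure hy) hKc
    isPreconnected_connectedComponentIn.closure

lemma punctured_ball {r : ℝ} (hr : 0 < r) : IsPreconnected (ball (0:ℂ) r \ {0}) := by
  have h := (far_connected (inv_pos.2 hr)).image (fun z : ℂ => z⁻¹) (by
    apply continuousOn_id.inv₀
    rintro z hz rfl
    simp at hz; linarith)
  convert h using 1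
  ext z
  simp only [Set.mem_sdiff, mem_ball, dist_zero_right, mem_singleton_iff, mem_image, mem_compl_iff,
    mem_closedBall, not_le]
  constructor
  · rintro ⟨h1, h2⟩
    refine ⟨z⁻¹, ?_, inv_inv z⟩
    rw [norm_inv]
    exact (inv_lt_inv₀ hr (norm_pos_iff.2 h2)).2 h1
  · rintro ⟨x, hx, rfl⟩
    have hx0 : 0 < ‖x‖ := (inv_pos.2 hr).trans hx
    exact ⟨by rw [norm_inv]; exact inv_lt_of_inv_lt₀ hr hx, inv_ne_zero (norm_pos_iff.1 hx0)⟩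

lemma puncture_preconn {A : Set ℂ} (hA : IsPreconnected A) {r : ℝ} (hr : 0 < r)
    (hrA : ball 0 r ⊆ A) : IsPreconnected (A \ {0}) := by
  have hP := punctured_ball hr
  have main : ∀ u v : Set ℂ, IsOpen u → IsOpen v → A \ {0} ⊆ u ∪ v → ((A \ {0}) ∩ v).Nonempty →
      ball (0:ℂ) r \ {0} ⊆ u → ((A \ {0}) ∩ (u ∩ v)).Nonempty := by
    rintro u v hu hv huv ⟨y, hyA, hyv⟩ hPu
    by_cases hyb : y ∈ ball (0:ℂ) r
    · exact ⟨y, hyA, hPu ⟨hyb, hyA.2⟩, hyv⟩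
    have h0 : (0:ℂ) ∈ ball (0:ℂ) r := by simpa using hr
    obtain ⟨x, hxA, hxu, hxv⟩ := hA (u ∪ ball 0 r) (v \ closedBall 0 (r/2)) (hu.union isOpen_ball)
      (hv.sdiff isClosed_closedBall) (by
        intro x hx
        by_cases hxb : x ∈ ball (0:ℂ) r
        · exact Or.inl (Or.inr hxb)
        · have hx0 : x ≠ 0 := by rintro rfl; exact hxb h0
          rcases huv ⟨hx, hx0⟩ with h | h
          · exact Or.inl (Or.inl h)
          · refine Or.inr ⟨h, fun h' => hxb ?_⟩
            simp at h' ⊢; linarith)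
      ⟨0, hrA h0, Or.inr h0⟩ ⟨y, hyA.1, hyv, fun h' => hyb (by simp at h' ⊢; linarith)⟩
    have hx0 : x ≠ 0 := by
      rintro rfl
      apply hxv.2
      simp; linarith
    refine ⟨x, ⟨hxA, hx0⟩, ?_, hxv.1⟩
    rcases hxu with h | h
    · exact h
    · exact hPu ⟨h, hx0⟩
  intro u v hu hv huv hnu hnv
  have hPA : ball (0:ℂ) r \ {0} ⊆ A \ {0} := sdiff_subset_sdiff_left hrA
  by_cases h1 : ((ball (0:ℂ) r \ {0}) ∩ u).Nonempty
  · by_cases h2 : ((ball (0:ℂ) r \ {0}) ∩ v).Nonempty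
    · obtain ⟨x, hx, hxx⟩ := hP u v hu hv (hPA.trans huv) h1 h2
      exact ⟨x, hPA hx, hxx⟩
    · apply main u v hu hv huv hnv
      intro x hx
      rcases huv (hPA hx) with h | h
      · exact h
      · exact (h2 ⟨x, hx, h⟩).elim
  · rw [inter_comm u v]
    apply main v u hv hu (by rwa [union_comm]) hnu
    intro x hx
    rcases huv (hPA hx) with h | h
    · exact (h1 ⟨x, hx, h⟩).elim
    · exact h

/-- uniformization of the exterior: `1/φ` maps the punctured disc onto `U` -/
structure ExtMap (U : Set ℂ) (φ : ℂ → ℂ) : Prop where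
  diff : DifferentiableOn ℂ φ (ball 0 1)
  inj : InjOn φ (ball 0 1)
  zero : φ 0 = 0
  openm : ∀ O ⊆ ball (0:ℂ) 1, IsOpen O → IsOpen (φ '' O)
  image : (fun w => (φ w)⁻¹) '' (ball 0 1 \ {0}) = U
  bdd : IsBounded (φ '' ball 0 1)

lemma exists_extMap {K : Set ℂ} (hK : IsCompact K) (hKc : IsPreconnected K) {r0 : ℝ} (hr0 : 0 < r0)
    (hr0K : ball 0 r0 ⊆ K) : ∃ φ, ExtMap (outer K) φ := by
  obtain ⟨R, hR0, hKR, hfar, hU⟩ := outer_eq hK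
  have h0b : (0:ℂ) ∈ ball (0:ℂ) r0 := by simpa using hr0
  have h0U : (0:ℂ) ∉ outer K := fun h => h.1 (hr0K h0b)
  have hUr : ∀ z ∈ outer K, r0 ≤ ‖z‖ := by
    intro z hz
    by_contra h
    push Not at h
    exact hz.1 (hr0K (by simpa using h))
  set V : Set ℂ := {z | z = 0 ∨ z⁻¹ ∈ outer K} with hV
  have hballV : ball (0:ℂ) R⁻¹ ⊆ V := by
    intro z hz
    by_cases hz0 : z = 0
    · exact Or.inl hz0
    · right
      apply hfar
      simp only [mem_compl_iff, mem_closedBall, dist_zero_right, not_le, norm_inv]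
      simp at hz
      exact (lt_inv_comm₀ (norm_pos_iff.2 hz0) hR0).1 hz
  have h0R : (0:ℂ) ∈ ball (0:ℂ) R⁻¹ := by simpa using hR0
  have hVo : IsOpen V := by
    rw [isOpen_iff_mem_nhds]
    intro z hz
    by_cases hz0 : z = 0
    · rw [hz0]; exact mem_of_superset (ball_mem_nhds _ (inv_pos.2 hR0)) hballV
    · have hzU : z⁻¹ ∈ outer K := by rcases hz with h | h; exact (hz0 h).elim; exact h
      have : ∀ᶠ w in 𝓝 z, w⁻¹ ∈ outer K :=
        (continuousAt_inv₀ hz0).eventually ((outer_open hK).mem_nhds hzU)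
      exact this.mono (fun w hw => Or.inr hw)
  have hVeq : V = ball (0:ℂ) R⁻¹ ∪ (fun z => z⁻¹) '' outer K := by
    ext z
    constructor
    · rintro (h | h)
      · left; rw [h]; exact h0R
      · right; exact ⟨z⁻¹, h, inv_inv z⟩
    · rintro (h | ⟨w, hw, rfl⟩)
      · exact hballV h
      · right; simpa using hw
  have hVp : IsPreconnected V := by
    rw [hVeq]
    obtain ⟨q, hq⟩ := far_point R
    have hq' : R < ‖q‖ := by simpa using hq
    refine IsPreconnected.union (q⁻¹) ?_ ⟨q, hfar hq, rfl⟩ (convex_ball _ _).isPreconnected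
      ((outer_preconn hK).image _ ?_)
    · simp only [mem_ball, dist_zero_right, norm_inv]
      exact (inv_lt_inv₀ (hR0.trans hq') hR0).2 hq'
    · apply continuousOn_id.inv₀
      rintro z hz rfl
      exact h0U hz
  have hVc : IsPreconnected Vᶜ := by
    have h1 := puncture_preconn (outer_compl_preconn hK hKc (hr0K h0b)) hr0
      (fun z hz h => h.1 (hr0K hz))
    have h2 := h1.image (fun z : ℂ => z⁻¹) (by
      apply continuousOn_id.inv₀
      rintro z hz rfl
      exact hz.2 rfl)
    convert h2 using 1
    ext z
    simp only [hV, mem_compl_iff, mem_ofPred_eq, not_or, mem_image, Set.mem_sdiff, mem_singleton_iff]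
    constructor
    · rintro ⟨a, b⟩
      exact ⟨z⁻¹, ⟨b, inv_ne_zero a⟩, inv_inv z⟩
    · rintro ⟨w, ⟨a, b⟩, rfl⟩
      exact ⟨inv_ne_zero b, by simpa using a⟩
  have hVb : IsBounded V := by
    apply (isBounded_closedBall (x := (0:ℂ)) (r := r0⁻¹)).subset
    rintro z (h | h)
    · rw [h]; simpa using hr0.le
    · have := hUr _ h
      rw [norm_inv] at this
      have hz : 0 < ‖z‖ := by
        rw [norm_pos_iff]
        rintro rfl
        rw [inv_zero] at h
        exact h0U h
      simp
      exact (le_inv_comm₀ hr0 hz).1 this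
  obtain ⟨ψ, hψ, hψi⟩ := riemann_mapping hVo hVb (Or.inl rfl) hVp hVc
  have hopen := open_image_of_deriv_ne_zero hVo hψ.diff hψ.der
  set φ := Function.invFunOn ψ V with hφ
  have hφV : ∀ w ∈ ball (0:ℂ) 1, φ w ∈ V := fun w hw =>
    Function.invFunOn_mem (by rw [← hψi] at hw; exact hw)
  have hψφ : ∀ w ∈ ball (0:ℂ) 1, ψ (φ w) = w := fun w hw =>
    Function.invFunOn_eq (by rw [← hψi] at hw; exact hw)
  have hφψ : ∀ z ∈ V, φ (ψ z) = z := fun z hz => by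
    have hm : ψ z ∈ ball (0:ℂ) 1 := by rw [← hψi]; exact ⟨z, hz, rfl⟩
    exact hψ.inj (hφV _ hm) hz (hψφ _ hm)
  have himg : ∀ O : Set ℂ, ∀ w ∈ ball (0:ℂ) 1, φ w ∈ O ↔ w ∈ ψ '' (V ∩ O) := by
    intro O w hw
    constructor
    · intro h; exact ⟨φ w, ⟨hφV w hw, h⟩, hψφ w hw⟩
    · rintro ⟨z, ⟨hz, hzO⟩, rfl⟩; rw [hφψ z hz]; exact hzO
  have hφc : ∀ w ∈ ball (0:ℂ) 1, ContinuousAt φ w := by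
    intro w hw
    rw [ContinuousAt, _root_.tendsto_nhds]
    intro O hO hwO
    have := (hopen (V ∩ O) inter_subset_left (hVo.inter hO)).mem_nhds ((himg O w hw).1 hwO)
    filter_upwards [this, isOpen_ball.mem_nhds hw] with x hx hxb
    exact (himg O x hxb).2 hx
  have h0ball : (0:ℂ) ∈ ball (0:ℂ) 1 := by simp
  have hφ0 : φ 0 = 0 := by
    have := hφψ 0 (Or.inl rfl); rwa [hψ.zero] at this
  have hinj : InjOn φ (ball 0 1) := by
    intro a ha b hb hab
    rw [← hψφ a ha, ← hψφ b hb, hab]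
  refine ⟨φ, ?_, hinj, hφ0, ?_, ?_, ?_⟩
  · intro w hw
    have hd : HasDerivAt ψ (deriv ψ (φ w)) (φ w) :=
      (hψ.diff.differentiableAt (hVo.mem_nhds (hφV w hw))).hasDerivAt
    exact (HasDerivAt.of_local_left_inverse (hφc w hw) hd (hψ.der _ (hφV w hw))
      (by filter_upwards [isOpen_ball.mem_nhds hw] with y hy using hψφ y hy)).differentiableAt.differentiableWithinAt
  · intro O hO hOo
    have : φ '' O = V ∩ ψ ⁻¹' O := by
      ext z
      constructor
      · rintro ⟨w, hw, rfl⟩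
        exact ⟨hφV w (hO hw), by rw [mem_preimage, hψφ w (hO hw)]; exact hw⟩
      · rintro ⟨hz, hzO⟩
        exact ⟨ψ z, hzO, hφψ z hz⟩
    rw [this]
    exact hψ.diff.continuousOn.isOpen_inter_preimage hVo hOo
  · ext z
    constructor
    · rintro ⟨w, ⟨hw, hw0⟩, rfl⟩
      rcases hφV w hw with h | h
      · exfalso
        apply hw0
        rw [← hψφ w hw, h, hψ.zero]; rfl
      · exact h
    · intro hz
      have hzV : z⁻¹ ∈ V := Or.inr (by simpa using hz)
      have hz0 : z ≠ 0 := by rintro rfl; exact h0U hz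
      refine ⟨ψ z⁻¹, ⟨by rw [← hψi]; exact ⟨_, hzV, rfl⟩, ?_⟩, ?_⟩
      · intro h
        have h2 := hφψ _ hzV
        rw [mem_singleton_iff.1 h, hφ0] at h2
        exact hz0 (inv_eq_zero.1 h2.symm)
      · simp [hφψ _ hzV]
  · apply hVb.subset
    rintro _ ⟨w, hw, rfl⟩
    exact hφV w hw

open Set Metric Bornology Filter Topology

namespace ExtMap
variable {U : Set ℂ} {φ : ℂ → ℂ}

lemma ne_zero (h : ExtMap U φ) {w : ℂ} (hw : w ∈ ball (0:ℂ) 1) (hw0 : w ≠ 0) : φ w ≠ 0 := by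
  intro h0
  apply hw0
  exact h.inj hw (by simp) (by rw [h0, h.zero])

lemma memU (h : ExtMap U φ) {w : ℂ} (hw : w ∈ ball (0:ℂ) 1) (hw0 : w ≠ 0) : (φ w)⁻¹ ∈ U := by
  rw [← h.image]; exact ⟨w, ⟨hw, hw0⟩, rfl⟩

lemma inj' (h : ExtMap U φ) : InjOn (fun w => (φ w)⁻¹) (ball (0:ℂ) 1 \ {0}) := by
  intro a ha b hb hab
  exact h.inj ha.1 hb.1 (inv_injective hab)

lemma cont (h : ExtMap U φ) : ContinuousOn (fun w => (φ w)⁻¹) (ball (0:ℂ) 1 \ {0}) :=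
  (h.diff.continuousOn.mono sdiff_subset).inv₀ (fun _ hw => h.ne_zero hw.1 hw.2)

lemma openm' (h : ExtMap U φ) {O : Set ℂ} (hO : O ⊆ ball (0:ℂ) 1 \ {0}) (hOo : IsOpen O) :
    IsOpen ((fun w => (φ w)⁻¹) '' O) := by
  have h1 := h.openm O (hO.trans sdiff_subset) hOo
  have : (fun w => (φ w)⁻¹) '' O = {0}ᶜ ∩ (fun z : ℂ => z⁻¹) ⁻¹' (φ '' O) := by
    ext z
    constructor
    · rintro ⟨w, hw, rfl⟩
      exact ⟨inv_ne_zero (h.ne_zero (hO hw).1 (hO hw).2), by simpa using ⟨w, hw, rfl⟩⟩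
    · rintro ⟨_, w, hw, hwz⟩
      exact ⟨w, hw, by simp [hwz]⟩
  rw [this]
  apply ContinuousOn.isOpen_inter_preimage _ isOpen_compl_singleton h1
  exact continuousOn_id.inv₀ (fun x hx => hx)

lemma lower (h : ExtMap U φ) : ∃ c > 0, ∀ w ∈ ball (0:ℂ) 1, 1 / 2 ≤ ‖w‖ → c ≤ ‖φ w‖ := by
  have h1 := h.openm (ball 0 (1/2)) (ball_subset_ball (by norm_num)) isOpen_ball
  obtain ⟨c, hc, hcs⟩ := Metric.isOpen_iff.1 h1 0 ⟨0, by simp, h.zero⟩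
  refine ⟨c, hc, fun w hw hw2 => ?_⟩
  by_contra hlt
  push Not at hlt
  obtain ⟨v, hv, hvw⟩ := hcs (show φ w ∈ ball 0 c by simpa using hlt)
  have := h.inj (ball_subset_ball (by norm_num) hv) hw hvw
  subst this
  simp at hv; linarith

end ExtMap

lemma compl_closedBall_preconn (a : ℂ) {r : ℝ} (hr : 0 < r) : IsPreconnected (closedBall a r)ᶜ := by
  have := (far_connected hr).image (fun z => z + a) (by fun_prop)
  convert this using 1
  ext z
  simp only [mem_compl_iff, mem_closedBall, mem_image, dist_zero_right]
  constructor
  · intro h; exact ⟨z - a, by rwa [← dist_eq_norm], by ring⟩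
  · rintro ⟨x, hx, rfl⟩; rwa [dist_eq_norm, add_sub_cancel_right]

lemma sep_lemma {K B : Set ℂ} {φ : ℂ → ℂ} (hK : IsCompact K) (h : ExtMap (outer K) φ)
    (hB : IsCompact B) (hKB : IsPreconnected (K ∩ B)) {O1 O2 : Set ℂ} (hO1 : IsOpen O1)
    (hO2 : IsOpen O2) (hd : Disjoint O1 O2) {w1 w2 : ℂ}
    (hw1 : w1 ∈ (ball (0:ℂ) 1 \ {0}) ∩ O1) (hw2 : w2 ∈ (ball (0:ℂ) 1 \ {0}) ∩ O2)
    (hcov : ∀ w ∈ ball (0:ℂ) 1 \ {0}, w ∉ O1 → w ∉ O2 → (φ w)⁻¹ ∈ B)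
    (hB1 : (φ w1)⁻¹ ∉ B) (hB2 : (φ w2)⁻¹ ∈ connectedComponentIn Bᶜ (φ w1)⁻¹) : False := by
  set D : Set ℂ := ball (0:ℂ) 1 \ {0} with hD
  have hDo : IsOpen D := isOpen_ball.sdiff isClosed_singleton
  have hu1 := h.memU hw1.1.1 hw1.1.2
  have hu2 := h.memU hw2.1.1 hw2.1.2
  have hUK : outer K ⊆ Kᶜ := fun z hz => hz.1
  have hj := janiszewski hK hB hKB (hUK hu1) hB1
    (mem_component_of_preconnected (outer_preconn hK) hUK hu1 hu2) hB2
  set C := connectedComponentIn (K ∪ B)ᶜ (φ w1)⁻¹ with hC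
  have hCs : C ⊆ (K ∪ B)ᶜ := connectedComponentIn_subset _ _
  have hp1 : (φ w1)⁻¹ ∈ C := mem_connectedComponentIn (by
    rintro (h' | h')
    · exact hUK hu1 h'
    · exact hB1 h')
  have hCp : IsPreconnected C := isPreconnected_connectedComponentIn
  have hCU : C ⊆ outer K := by
    intro z hz
    obtain ⟨R, -, -, hfar, hR⟩ := outer_eq hK
    obtain ⟨q, hq⟩ := far_point R
    have e := hR q hq
    rw [e] at hu1 ⊢
    rw [connectedComponentIn_eq hu1]
    exact mem_component_of_preconnected hCp (fun y hy hyK => hCs hy (Or.inl hyK)) hp1 hz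
  have hcover : C ⊆ (fun w => (φ w)⁻¹) '' (D ∩ O1) ∪ (fun w => (φ w)⁻¹) '' (D ∩ O2) := by
    intro z hz
    have hzU := hCU hz
    rw [← h.image] at hzU
    obtain ⟨w, hw, rfl⟩ := hzU
    by_cases h1 : w ∈ O1
    · exact Or.inl ⟨w, ⟨hw, h1⟩, rfl⟩
    by_cases h2 : w ∈ O2
    · exact Or.inr ⟨w, ⟨hw, h2⟩, rfl⟩
    exact (hCs hz (Or.inr (hcov w hw h1 h2))).elim
  obtain ⟨z, hz, ⟨v, hv, rfl⟩, ⟨v', hv', hvv⟩⟩ := hCp _ _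
    (h.openm' inter_subset_left (hDo.inter hO1)) (h.openm' inter_subset_left (hDo.inter hO2)) hcover
    ⟨_, hp1, w1, hw1, rfl⟩ ⟨_, hj, w2, hw2, rfl⟩
  have := h.inj' hv'.1 hv.1 hvv
  subst this
  exact disjoint_left.1 hd hv.2 hv'.2

/-- uniform local connectedness -/
def ULC (K : Set ℂ) : Prop := ∀ ε > 0, ∃ δ > 0, ∀ x ∈ K, ∀ y ∈ K, dist x y < δ →
  ∃ E ⊆ K, E ⊆ closedBall x ε ∧ x ∈ E ∧ y ∈ E ∧ IsPreconnected E

lemma ulc_hull {K : Set ℂ} (hK : IsClosed K) {ε δ : ℝ} (hε : 0 ≤ ε)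
    (hE : ∀ x ∈ K, ∀ y ∈ K, dist x y < δ →
      ∃ E ⊆ K, E ⊆ closedBall x ε ∧ x ∈ E ∧ y ∈ E ∧ IsPreconnected E)
    {F : Set ℂ} (hF : F ⊆ K) {a0 : ℂ} {η : ℝ} (hFa : F ⊆ closedBall a0 η) (hη : 2 * η < δ) :
    ∃ E, IsClosed E ∧ F ⊆ E ∧ E ⊆ K ∧ E ⊆ closedBall a0 (η + ε) ∧ IsPreconnected E := by
  rcases F.eq_empty_or_nonempty with rfl | ⟨a, ha⟩
  · exact ⟨∅, isClosed_empty, subset_rfl, empty_subset _, empty_subset _, isPreconnected_empty⟩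
  have h1 : ∀ y : F, ∃ E ⊆ K, E ⊆ closedBall a ε ∧ a ∈ E ∧ (y : ℂ) ∈ E ∧ IsPreconnected E := by
    intro y
    apply hE a (hF ha) y (hF y.2)
    have e1 := hFa ha
    have e2 := hFa y.2
    rw [mem_closedBall] at e1 e2
    linarith [dist_triangle_right a y a0]
  choose E hEK hEb haE hyE hEp using h1
  have hsub : closedBall a ε ⊆ closedBall a0 (η + ε) := by
    apply closedBall_subset_closedBall'
    have := hFa ha
    rw [mem_closedBall] at this; linarith
  refine ⟨closure (⋃ y, E y), isClosed_closure, ?_, ?_, ?_, ?_⟩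
  · intro y hy
    exact subset_closure (mem_iUnion.2 ⟨⟨y, hy⟩, hyE _⟩)
  · exact closure_minimal (iUnion_subset hEK) hK
  · exact (closure_minimal (iUnion_subset hEb) isClosed_closedBall).trans hsub
  · exact (isPreconnected_iUnion ⟨a, mem_iInter.2 haE⟩ hEp).closure

lemma small_images {K : Set ℂ} {φ : ℂ → ℂ} (hK : IsCompact K) (h : ExtMap (outer K) φ)
    (hU : ULC K) {ζ : ℂ} (hζ : ‖ζ‖ = 1) {ε : ℝ} (hε : 0 < ε) :
    ∃ r > 0, r < 1 / 2 ∧ ∀ w ∈ ball (0:ℂ) 1 ∩ ball ζ r, ∀ w' ∈ ball (0:ℂ) 1 ∩ ball ζ r,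
      dist (φ w)⁻¹ (φ w')⁻¹ ≤ ε := by
  wlog hε1 : ε ≤ 1 generalizing ε
  · obtain ⟨r, hr, hr2, hh⟩ := this one_pos le_rfl
    exact ⟨r, hr, hr2, fun w hw w' hw' => (hh w hw w' hw').trans (not_le.1 hε1).le⟩
  obtain ⟨c, hc, hlow⟩ := h.lower
  obtain ⟨δ, hδ, hE⟩ := hU (ε / 4) (by positivity)
  -- far point
  obtain ⟨w0, hw0, hw0f⟩ : ∃ w0 ∈ ball (0:ℂ) 1 \ {0}, c⁻¹ + 1 < ‖(φ w0)⁻¹‖ := by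
    obtain ⟨R, -, -, hfar, hR⟩ := outer_eq hK
    obtain ⟨q, hq⟩ := far_point (max R (c⁻¹ + 1))
    have hq2 : max R (c⁻¹ + 1) < ‖q‖ := by simpa using hq
    have : q ∈ outer K := hfar (by simpa using (le_max_left _ _).trans_lt hq2)
    rw [← h.image] at this
    obtain ⟨w0, hw0, rfl⟩ := this
    exact ⟨w0, hw0, (le_max_right _ _).trans_lt hq2⟩
  have hupp : ∀ w ∈ ball (0:ℂ) 1, 1 / 2 ≤ ‖w‖ → ‖(φ w)⁻¹‖ ≤ c⁻¹ := by
    intro w hw hw2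
    rw [norm_inv]
    exact inv_anti₀ hc (hlow w hw hw2)
  have hw0h : ‖w0‖ < 1 / 2 := by
    by_contra hcon
    push Not at hcon
    linarith [hupp w0 hw0.1 hcon]
  set η := min (δ / 4) (ε / 4) with hη
  have hη0 : 0 < η := by positivity
  obtain ⟨r, hr, hr2, hla⟩ := length_area h.diff h.inj h.bdd hζ (δ := c ^ 2 * η) (ρ := 1 / 2)
    (by positivity) (by norm_num)
  have hzbig : ∀ w : ℂ, dist w ζ ≤ r → 1 / 2 ≤ ‖w‖ := by
    intro w hw
    have : ‖ζ‖ ≤ ‖w‖ + ‖ζ - w‖ := by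
      have := norm_add_le w (ζ - w); simpa using this
    rw [dist_comm, dist_eq_norm] at hw
    linarith
  set γ : Set ℂ := {w | w ∈ ball (0:ℂ) 1 ∧ dist w ζ = r} with hγ
  set Γ := (fun w => (φ w)⁻¹) '' γ with hΓ
  -- a point of γ
  set v0 : ℂ := ((1 - r : ℝ) : ℂ) * ζ with hv0
  have hv0γ : v0 ∈ γ := by
    constructor
    · simp only [hv0, mem_ball, dist_zero_right, norm_mul, hζ, Complex.norm_real, Real.norm_eq_abs]
      rw [abs_of_pos (by linarith)]; linarith
    · rw [dist_eq_norm, show v0 - ζ = ((-r : ℝ) : ℂ) * ζ by rw [hv0]; push_cast; ring]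
      simp [hζ, abs_of_pos hr]
  set a0 := (φ v0)⁻¹ with ha0
  have hΓa : Γ ⊆ closedBall a0 η := by
    rintro _ ⟨w, hw, rfl⟩
    have e1 := hla w hw.1 v0 hv0γ.1 hw.2 hv0γ.2
    have e2 := hlow w hw.1 (hzbig w hw.2.le)
    have e3 := hlow v0 hv0γ.1 (hzbig v0 hv0γ.2.le)
    have n2 : φ w ≠ 0 := by rw [← norm_pos_iff]; linarith
    have n3 : φ v0 ≠ 0 := by rw [← norm_pos_iff]; linarith
    rw [mem_closedBall, ha0, dist_eq_norm, inv_sub_inv n2 n3, norm_div, norm_mul,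
      div_le_iff₀ (by positivity), ← dist_eq_norm, dist_comm]
    calc dist (φ w) (φ v0) ≤ c ^ 2 * η := e1.le
      _ = η * (c * c) := by ring
      _ ≤ _ := by gcongr
  have hclΓ : closure Γ ⊆ closedBall a0 η := closure_minimal hΓa isClosed_closedBall
  obtain ⟨E, hEcl, hFE, hEK, hEb, hEp⟩ := ulc_hull hK.isClosed (by positivity) hE
    (F := closure Γ ∩ K) inter_subset_right (inter_subset_left.trans hclΓ) (a0 := a0) (η := η)
    (by linarith [min_le_left (δ/4) (ε/4)])
  have hηε : η ≤ ε / 4 := min_le_right _ _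
  have hB : closure Γ ∪ E ⊆ closedBall a0 (ε / 2) := by
    apply union_subset
    · exact hclΓ.trans (closedBall_subset_closedBall (by linarith))
    · exact hEb.trans (closedBall_subset_closedBall (by linarith))
  have hBc : IsCompact (closure Γ ∪ E) :=
    (isCompact_closedBall a0 (ε / 2)).of_isClosed_subset (isClosed_closure.union hEcl) hB
  have hKB : K ∩ (closure Γ ∪ E) = E := by
    ext z
    constructor
    · rintro ⟨hz, h1 | h1⟩
      · exact hFE ⟨h1, hz⟩
      · exact h1
    · intro hz; exact ⟨hEK hz, Or.inr hz⟩
  have ha0n : ‖a0‖ ≤ c⁻¹ := hupp v0 hv0γ.1 (hzbig v0 hv0γ.2.le)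
  have hq : (φ w0)⁻¹ ∉ closedBall a0 (ε / 2) := by
    intro hq
    rw [mem_closedBall, dist_eq_norm] at hq
    have := norm_sub_norm_le (φ w0)⁻¹ a0
    linarith
  have hmain : ∀ w ∈ ball (0:ℂ) 1 ∩ ball ζ r, (φ w)⁻¹ ∈ closedBall a0 (ε / 2) := by
    intro w hw
    by_contra hcon
    have hwn : w ≠ 0 := by
      rintro rfl
      have := hzbig 0 (mem_ball.1 hw.2).le
      norm_num at this
    refine sep_lemma hK h hBc (by rw [hKB]; exact hEp) (O1 := ball ζ r) (O2 := (closedBall ζ r)ᶜ)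
      isOpen_ball isClosed_closedBall.isOpen_compl
      (disjoint_left.2 fun x hx hx' => hx' (ball_subset_closedBall hx))
      (w1 := w) (w2 := w0) ⟨⟨hw.1, hwn⟩, hw.2⟩ ⟨hw0, ?_⟩ ?_ (fun hh => hcon (hB hh)) ?_
    · intro hh
      linarith [hzbig w0 hh]
    · intro v hv h1 h2
      left
      apply subset_closure
      refine ⟨v, ⟨hv.1, ?_⟩, rfl⟩
      simp only [mem_compl_iff, not_not, mem_closedBall, mem_ball, not_lt] at h1 h2
      exact le_antisymm h2 h1
    · exact mem_component_of_preconnected (compl_closedBall_preconn a0 (half_pos hε))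
        (compl_subset_compl.2 hB) hcon hq
  refine ⟨r, hr, hr2, fun w hw w' hw' => ?_⟩
  have e1 := hmain w hw
  have e2 := hmain w' hw'
  rw [mem_closedBall] at e1 e2
  linarith [dist_triangle_right (φ w)⁻¹ (φ w')⁻¹ a0]

lemma exists_extMap_cont {K : Set ℂ} (hK : IsCompact K) (hKc : IsPreconnected K) {r0 : ℝ}
    (hr0 : 0 < r0) (hr0K : ball 0 r0 ⊆ K) (hU : ULC K) :
    ∃ φ, ExtMap (outer K) φ ∧ ContinuousOn φ (closedBall 0 1) := by
  obtain ⟨φ, h⟩ := exists_extMap hK hKc hr0 hr0K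
  have hUr : ∀ z ∈ outer K, r0 ≤ ‖z‖ := by
    intro z hz
    by_contra h
    push Not at h
    exact hz.1 (hr0K (by simpa using h))
  have hcl : closedBall (0:ℂ) 1 ⊆ closure (ball (0:ℂ) 1) := by
    rw [closure_ball _ one_ne_zero]
  have hlim : ∀ x ∈ closedBall (0:ℂ) 1, ∃ y, Tendsto φ (𝓝[ball 0 1] x) (𝓝 y) := by
    intro x hx
    by_cases hxb : x ∈ ball (0:ℂ) 1
    · exact ⟨φ x, (h.diff.continuousOn x hxb)⟩
    have hx1 : ‖x‖ = 1 := le_antisymm (by simpa using hx) (by simpa using hxb)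
    have : (𝓝[ball 0 1] x).NeBot := mem_closure_iff_nhdsWithin_neBot.1 (hcl hx)
    have hcau : Cauchy (map φ (𝓝[ball 0 1] x)) := by
      rw [Metric.cauchy_iff]
      refine ⟨inferInstance, fun ε hε => ?_⟩
      obtain ⟨r, hr, hr2, hs⟩ := small_images hK h hU hx1 (ε := ε * r0 ^ 2 / 2) (by positivity)
      refine ⟨φ '' (ball 0 1 ∩ ball x r), image_mem_map ?_, ?_⟩
      · exact inter_mem self_mem_nhdsWithin (mem_nhdsWithin_of_mem_nhds (ball_mem_nhds _ hr))
      · rintro _ ⟨w, hw, rfl⟩ _ ⟨w', hw', rfl⟩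
        have hne : ∀ w ∈ ball (0:ℂ) 1 ∩ ball x r, w ≠ 0 := by
          rintro w hw rfl
          have := hw.2
          simp [hx1] at this; linarith
        have key := hs w hw w' hw'
        have u1 := hUr _ (h.memU hw.1 (hne w hw))
        have u2 := hUr _ (h.memU hw'.1 (hne w' hw'))
        have n1 := h.ne_zero hw.1 (hne w hw)
        have n2 := h.ne_zero hw'.1 (hne w' hw')
        have e : φ w - φ w' = - ((φ w)⁻¹ - (φ w')⁻¹) * (φ w * φ w') := by field_simp; ring
        have p1 := norm_pos_iff.2 n1
        have p2 := norm_pos_iff.2 n2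
        rw [norm_inv] at u1 u2
        have u1' := (le_inv_comm₀ hr0 p1).1 u1
        have u2' := (le_inv_comm₀ hr0 p2).1 u2
        rw [dist_eq_norm, e, norm_mul, norm_neg, norm_mul, ← dist_eq_norm]
        calc _ ≤ (ε * r0 ^ 2 / 2) * (r0⁻¹ * r0⁻¹) := by gcongr
          _ = ε / 2 := by field_simp
          _ < ε := by linarith
    obtain ⟨y, hy⟩ := CompleteSpace.complete hcau
    exact ⟨y, hy⟩
  have hcont := continuousOn_extendFrom hcl hlim
  set g := extendFrom (ball 0 1) φ with hg
  have heq : ∀ x ∈ ball (0:ℂ) 1, g x = φ x := fun x hx =>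
    extendFrom_eq (subset_closure hx) (h.diff.continuousOn x hx)
  refine ⟨g, ⟨h.diff.congr heq, h.inj.congr (fun x hx => (heq x hx).symm), ?_, ?_, ?_, ?_⟩, hcont⟩
  · rw [heq 0 (by simp), h.zero]
  · intro O hO hOo
    rw [image_congr (fun x hx => heq x (hO hx))]
    exact h.openm O hO hOo
  · rw [← h.image]
    exact image_congr (fun x hx => by rw [heq x hx.1])
  · rw [image_congr heq]; exact h.bdd

open Set Metric Bornology Filter Topology

lemma arc_points {a b : ℂ} (ha : ‖a‖ = 1) (hb : ‖b‖ = 1) (hab : a ≠ b) :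
    (∃ m : ℂ, ‖m‖ = 1 ∧ 0 < ((m - a) * (starRingEnd ℂ) (b - a)).im) ∧
    (∃ m : ℂ, ‖m‖ = 1 ∧ ((m - a) * (starRingEnd ℂ) (b - a)).im < 0) := by
  set d := b - a with hd
  have hd0 : d ≠ 0 := sub_ne_zero.2 hab.symm
  have hN : 0 < ‖d‖ := norm_pos_iff.2 hd0
  have hNc : (‖d‖ : ℂ) ≠ 0 := by exact_mod_cast hN.ne'
  have ha2 : a.re ^ 2 + a.im ^ 2 = 1 := by
    have := Complex.normSq_eq_norm_sq a
    rw [ha, Complex.normSq_apply] at this; nlinarith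
  have hb2 : b.re ^ 2 + b.im ^ 2 = 1 := by
    have := Complex.normSq_eq_norm_sq b
    rw [hb, Complex.normSq_apply] at this; nlinarith
  have hN2 : ‖d‖ ^ 2 = (b.re - a.re) ^ 2 + (b.im - a.im) ^ 2 := by
    have := Complex.normSq_eq_norm_sq d
    rw [← this, Complex.normSq_apply]; simp [hd]; ring
  set I := (a * (starRingEnd ℂ) d).im with hI
  have hIe : I = a.im * (b.re - a.re) - a.re * (b.im - a.im) := by
    simp [hI, hd]; ring
  have hI2 : I ^ 2 = ‖d‖ ^ 2 - (‖d‖ ^ 2 / 2) ^ 2 := by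
    rw [hIe, hN2]
    have h1 : a.re ^ 2 = 1 - a.im ^ 2 := by linarith
    have h2 : b.re ^ 2 = 1 - b.im ^ 2 := by linarith
    have e1 : ((b.re - a.re) ^ 2 + (b.im - a.im) ^ 2) = 2 - 2 * (a.re * b.re + a.im * b.im) := by
      nlinarith
    rw [e1]
    have e2 : a.im * (b.re - a.re) - a.re * (b.im - a.im) = a.im * b.re - a.re * b.im := by ring
    rw [e2]
    have e3 : (a.im * b.re - a.re * b.im) ^ 2 + (a.re * b.re + a.im * b.im) ^ 2
        = (a.re ^ 2 + a.im ^ 2) * (b.re ^ 2 + b.im ^ 2) := by ring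
    rw [ha2, hb2] at e3
    linarith
  have habs : |I| < ‖d‖ := by
    apply abs_lt_of_sq_lt_sq _ hN.le
    rw [hI2]
    have : 0 < (‖d‖ ^ 2 / 2) ^ 2 := by positivity
    linarith
  rw [abs_lt] at habs
  have hdd : d * (starRingEnd ℂ) d = (‖d‖ : ℂ) * ‖d‖ := by
    rw [Complex.mul_conj, Complex.normSq_eq_norm_sq]; push_cast; ring
  constructor
  · refine ⟨Complex.I * (d / ‖d‖), by simp [hN.ne'], ?_⟩
    have e : (Complex.I * (d / ‖d‖) - a) * (starRingEnd ℂ) d = ((‖d‖ : ℝ) : ℂ) * Complex.I - a * (starRingEnd ℂ) d := by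
      rw [sub_mul]; congr 1
      field_simp
      rw [hdd]; ring
    rw [e, Complex.sub_im, ← hI]
    simp; linarith
  · refine ⟨-(Complex.I * (d / ‖d‖)), by simp [hN.ne'], ?_⟩
    have e : (-(Complex.I * (d / ‖d‖)) - a) * (starRingEnd ℂ) d = -(((‖d‖ : ℝ) : ℂ) * Complex.I) - a * (starRingEnd ℂ) d := by
      rw [sub_mul]; congr 1
      field_simp
      rw [hdd]; ring
    rw [e, Complex.sub_im, ← hI]
    simp; linarith

lemma chord_zero {a b w : ℂ} (ha : ‖a‖ = 1) (hb : ‖b‖ = 1) (hab : a ≠ b) (hw : ‖w‖ = 1)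
    (h : ((w - a) * (starRingEnd ℂ) (b - a)).im = 0) : w = a ∨ w = b := by
  have nz : ∀ z : ℂ, ‖z‖ = 1 → z ≠ 0 := by rintro z hz rfl; simp at hz
  have cj : ∀ z : ℂ, ‖z‖ = 1 → (starRingEnd ℂ) z = z⁻¹ := by
    intro z hz
    rw [Complex.inv_def, Complex.normSq_eq_norm_sq, hz]; simp
  have h1 := Complex.conj_eq_iff_im.2 h
  have na := nz a ha
  have nb := nz b hb
  have nw := nz w hw
  simp only [map_mul, map_sub, Complex.conj_conj] at h1
  rw [cj a ha, cj b hb, cj w hw] at h1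
  field_simp at h1
  have h2 : (w - a) * ((w - b) * (b - a)) = 0 := by linear_combination (1 : ℂ) * h1
  rcases mul_eq_zero.1 h2 with h3 | h3
  · left; exact sub_eq_zero.1 h3
  · rcases mul_eq_zero.1 h3 with h4 | h4
    · right; exact sub_eq_zero.1 h4
    · exact (hab (sub_eq_zero.1 h4).symm).elim

lemma nonconst_arc {φ : ℂ → ℂ} (hc : ContinuousOn φ (closedBall 0 1))
    (hd : DifferentiableOn ℂ φ (ball 0 1)) {c : ℂ} (h0 : φ 0 ≠ c) {A : Set ℂ} (hA : IsOpen A)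
    {m : ℂ} (hm : ‖m‖ = 1) (hmA : m ∈ A) : ∃ ζ ∈ A, ‖ζ‖ = 1 ∧ φ ζ ≠ c := by
  by_contra hcon
  push Not at hcon
  have hm0 : m ≠ 0 := by rintro rfl; simp at hm
  obtain ⟨F, hF⟩ := (isCompact_sphere (0:ℂ) 1).elim_finite_subcover
    (fun u : sphere (0:ℂ) 1 => {w : ℂ | (u : ℂ) * w ∈ A})
    (fun u => hA.preimage (by fun_prop)) (by
      intro w hw
      have hw1 : ‖w‖ = 1 := by simpa using hw
      have hw0 : w ≠ 0 := by rintro rfl; simp at hw1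
      refine mem_iUnion.2 ⟨⟨m * w⁻¹, by simp [hm, hw1]⟩, ?_⟩
      simp only [mem_ofPred_eq]
      rwa [inv_mul_cancel_right₀ hw0])
  set P : ℂ → ℂ := fun w => ∏ u ∈ F, (φ (u * w) - c) with hP
  have hu : ∀ u : sphere (0:ℂ) 1, ‖(u : ℂ)‖ = 1 := fun u => by simp
  have hcl : closure (ball (0:ℂ) 1) = closedBall 0 1 := closure_ball _ one_ne_zero
  have hPd : DiffContOnCl ℂ P (ball 0 1) := by
    constructor
    · apply DifferentiableOn.fun_finsetProd
      intro u _
      apply DifferentiableOn.sub_const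
      exact hd.comp (t := ball (0:ℂ) 1) (by fun_prop) (fun w hw => by simpa [hu] using hw)
    · rw [hcl]
      apply continuousOn_finsetProd
      intro u _
      apply ContinuousOn.sub _ continuousOn_const
      exact hc.comp (t := closedBall (0:ℂ) 1) (by fun_prop) (fun w hw => by simpa [hu] using hw)
  have hfr : ∀ z ∈ frontier (ball (0:ℂ) 1), ‖P z‖ ≤ 0 := by
    intro z hz
    rw [frontier_ball _ one_ne_zero] at hz
    obtain ⟨u, hz2⟩ := mem_iUnion.1 (hF hz)
    obtain ⟨huF, huA⟩ := mem_iUnion.1 hz2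
    have hz1 : ‖z‖ = 1 := by simpa using hz
    have := hcon (u * z) huA (by simp [hz1])
    rw [norm_le_zero_iff, hP]
    exact Finset.prod_eq_zero huF (by simp [this])
  have := Complex.norm_le_of_forall_mem_frontier_norm_le isBounded_ball hPd hfr
    (subset_closure (by simp : (0:ℂ) ∈ ball (0:ℂ) 1))
  rw [norm_le_zero_iff, hP] at this
  simp only [mul_zero] at this
  rw [Finset.prod_const] at this
  exact pow_ne_zero _ (sub_ne_zero.2 h0) this

section
variable {K : Set ℂ} {φ : ℂ → ℂ}

lemma bd_ne_zero (h : ExtMap (outer K) φ) (hc : ContinuousOn φ (closedBall 0 1)) {ζ : ℂ}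
    (hζ : ‖ζ‖ ≤ 1) (hζ0 : ζ ≠ 0) : φ ζ ≠ 0 := by
  by_cases hb : ζ ∈ ball (0:ℂ) 1
  · exact h.ne_zero hb hζ0
  have h1 : ‖ζ‖ = 1 := le_antisymm hζ (by simpa using hb)
  obtain ⟨c, hc0, hlow⟩ := h.lower
  have hmem : ζ ∈ closure (ball (0:ℂ) 1) := by
    rw [closure_ball _ one_ne_zero]; simpa using hζ
  have : (𝓝[ball 0 1] ζ).NeBot := mem_closure_iff_nhdsWithin_neBot.1 hmem
  have ht : Tendsto φ (𝓝[ball 0 1] ζ) (𝓝 (φ ζ)) :=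
    (hc ζ (by simpa using hζ)).mono_left (nhdsWithin_mono _ ball_subset_closedBall)
  have hev : ∀ᶠ w in 𝓝[ball 0 1] ζ, c ≤ ‖φ w‖ := by
    have hn : ∀ᶠ w in 𝓝 ζ, 1 / 2 < ‖w‖ :=
      continuous_norm.continuousAt.eventually (lt_mem_nhds (by simp only [h1]; norm_num))
    filter_upwards [self_mem_nhdsWithin, mem_nhdsWithin_of_mem_nhds hn] with w hw hw2
    exact hlow w hw (le_of_lt hw2)
  have := ge_of_tendsto ht.norm hev
  rw [← norm_pos_iff]; linarith

lemma contΦ (h : ExtMap (outer K) φ) (hc : ContinuousOn φ (closedBall 0 1)) :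
    ContinuousOn (fun w => (φ w)⁻¹) (closedBall 0 1 \ {0}) :=
  (hc.mono sdiff_subset).inv₀ (fun w hw => bd_ne_zero h hc (by simpa using hw.1) hw.2)

lemma bd_not_mem (h : ExtMap (outer K) φ) (hc : ContinuousOn φ (closedBall 0 1)) {ζ : ℂ}
    (hζ : ‖ζ‖ = 1) : (φ ζ)⁻¹ ∉ outer K := by
  intro hU
  rw [← h.image] at hU
  obtain ⟨w0, hw0, he⟩ := hU
  have he' : φ w0 = φ ζ := inv_injective he
  have hw01 : ‖w0‖ < 1 := by simpa using hw0.1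
  set s := (1 - ‖w0‖) / 2 with hs
  have hs0 : 0 < s := by rw [hs]; linarith
  have hsub : ball w0 s ⊆ ball (0:ℂ) 1 := by
    apply ball_subset_ball'; simp; linarith
  have ho := h.openm (ball w0 s) hsub isOpen_ball
  have hmem : ζ ∈ closure (ball (0:ℂ) 1) := by
    rw [closure_ball _ one_ne_zero]; simpa using hζ.le
  have : (𝓝[ball 0 1] ζ).NeBot := mem_closure_iff_nhdsWithin_neBot.1 hmem
  have ht : Tendsto φ (𝓝[ball 0 1] ζ) (𝓝 (φ ζ)) :=
    (hc ζ (by simpa using hζ.le)).mono_left (nhdsWithin_mono _ ball_subset_closedBall)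
  have h1 := ht.eventually (ho.mem_nhds (by rw [← he']; exact ⟨w0, by simpa using hs0, rfl⟩))
  have h2 : ∀ᶠ w in 𝓝[ball 0 1] ζ, w ∈ ball ζ s :=
    mem_nhdsWithin_of_mem_nhds (ball_mem_nhds _ hs0)
  obtain ⟨w, ⟨⟨v, hv, hvw⟩, hwζ⟩, hwb⟩ := ((h1.and h2).and self_mem_nhdsWithin).exists
  have := h.inj (hsub hv) hwb hvw
  subst this
  rw [mem_ball] at hv hwζ
  have e1 : ‖ζ‖ ≤ ‖w0‖ + dist ζ w0 := by
    rw [dist_eq_norm]; have := norm_add_le w0 (ζ - w0); simpa using this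
  have e2 := dist_triangle_left ζ w0 v
  linarith

lemma bd_frontier (hK : IsCompact K) (h : ExtMap (outer K) φ) (hc : ContinuousOn φ (closedBall 0 1)) {ζ : ℂ}
    (hζ : ‖ζ‖ = 1) : (φ ζ)⁻¹ ∈ frontier (outer K) := by
  rw [(outer_open hK).frontier_eq]
  refine ⟨?_, bd_not_mem h hc hζ⟩
  have hζ0 : ζ ≠ 0 := by rintro rfl; simp at hζ
  have hmem : ζ ∈ closure (ball (0:ℂ) 1) := by
    rw [closure_ball _ one_ne_zero]; simpa using hζ.le
  have : (𝓝[ball 0 1] ζ).NeBot := mem_closure_iff_nhdsWithin_neBot.1 hmem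
  have ht : Tendsto φ (𝓝[ball 0 1] ζ) (𝓝 (φ ζ)) :=
    (hc ζ (by simpa using hζ.le)).mono_left (nhdsWithin_mono _ ball_subset_closedBall)
  have ht2 := ht.inv₀ (bd_ne_zero h hc hζ.le hζ0)
  apply mem_closure_of_tendsto ht2
  have hn : ∀ᶠ w in 𝓝 ζ, w ≠ 0 := isOpen_compl_singleton.mem_nhds hζ0
  filter_upwards [self_mem_nhdsWithin, mem_nhdsWithin_of_mem_nhds hn] with w hw hw0
  exact h.memU hw hw0

lemma bd_surj (hK : IsCompact K) {r0 : ℝ} (hr0 : 0 < r0) (hr0K : ball 0 r0 ⊆ K)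
    (h : ExtMap (outer K) φ) (hc : ContinuousOn φ (closedBall 0 1)) {y : ℂ}
    (hy : y ∈ frontier (outer K)) : ∃ ζ, ‖ζ‖ = 1 ∧ (φ ζ)⁻¹ = y := by
  rw [(outer_open hK).frontier_eq] at hy
  have hy0 : y ≠ 0 := by
    rintro rfl
    obtain ⟨z, hz, hzU⟩ := mem_closure_iff.1 hy.1 (ball 0 r0) isOpen_ball (by simpa using hr0)
    exact hzU.1 (hr0K hz)
  have hcl : y⁻¹ ∈ closure (φ '' closedBall 0 1) := by
    have : (𝓝[outer K] y).NeBot := mem_closure_iff_nhdsWithin_neBot.1 hy.1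
    have ht : Tendsto (fun z : ℂ => z⁻¹) (𝓝[outer K] y) (𝓝 y⁻¹) :=
      (continuousAt_inv₀ hy0).tendsto.mono_left nhdsWithin_le_nhds
    apply mem_closure_of_tendsto ht
    filter_upwards [self_mem_nhdsWithin] with z hz
    rw [← h.image] at hz
    obtain ⟨w, hw, rfl⟩ := hz
    exact ⟨w, ball_subset_closedBall hw.1, by simp⟩
  rw [((isCompact_closedBall (0:ℂ) 1).image_of_continuousOn hc).isClosed.closure_eq] at hcl
  obtain ⟨w, hw, hwy⟩ := hcl
  refine ⟨w, ?_, by rw [hwy, inv_inv]⟩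
  by_contra hne
  have hwb : w ∈ ball (0:ℂ) 1 := by
    simp at hw ⊢
    exact lt_of_le_of_ne hw hne
  apply hy.2
  have hw0 : w ≠ 0 := by
    rintro rfl
    rw [h.zero] at hwy
    exact hy0 (inv_eq_zero.1 hwy.symm)
  have := h.memU hwb hw0
  rwa [hwy, inv_inv] at this

lemma bd_inj (hK : IsCompact K) (h : ExtMap (outer K) φ) (hc : ContinuousOn φ (closedBall 0 1))
    (hcut : ∀ x ∈ frontier (outer K), IsPreconnected (K \ {x})) {a b : ℂ} (ha : ‖a‖ = 1)
    (hb : ‖b‖ = 1) (hab : φ a = φ b) : a = b := by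
  by_contra hne
  set x := (φ a)⁻¹ with hx
  have hxb : (φ b)⁻¹ = x := by rw [hx, hab]
  set l : ℂ → ℝ := fun w => ((w - a) * (starRingEnd ℂ) (b - a)).im with hl
  have hlc : Continuous l := by simp only [hl]; fun_prop
  set M := l 0 + 1 with hM
  set H : ℂ → ℝ := fun w => l w + (‖w‖ ^ 2 - 1) * M with hH
  have hHc : Continuous H := by simp only [hH]; fun_prop
  have hH0 : H 0 = -1 := by simp [hH, hM]
  have hHs : ∀ w : ℂ, ‖w‖ = 1 → H w = l w := by intro w hw; simp [hH, hw]
  set T : Set ℂ := {w | w ∈ closedBall (0:ℂ) 1 ∧ H w = 0} with hT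
  have hTc : IsCompact T := (isCompact_closedBall (0:ℂ) 1).inter_right
    (isClosed_singleton.preimage hHc : IsClosed (H ⁻¹' {0}))
  have hT0 : (0:ℂ) ∉ T := by rintro ⟨-, h0⟩; rw [hH0] at h0; norm_num at h0
  have hTs : T ⊆ closedBall 0 1 \ {0} := fun w hw => ⟨hw.1, by rintro rfl; exact hT0 hw⟩
  set C := (fun w => (φ w)⁻¹) '' T with hC
  have hCc : IsCompact C := hTc.image_of_continuousOn ((contΦ h hc).mono hTs)
  have hUK : outer K ⊆ Kᶜ := fun z hz => hz.1
  have hcases : ∀ w ∈ closedBall (0:ℂ) 1, w ∈ ball (0:ℂ) 1 ∨ ‖w‖ = 1 := by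
    intro w hw
    simp at hw ⊢
    exact lt_or_eq_of_le hw
  have hKC : K ∩ C ⊆ {x} := by
    rintro _ ⟨hz, w, hw, rfl⟩
    rcases hcases w hw.1 with hwb | hw1
    · exact (hUK (h.memU hwb (hTs hw).2) hz).elim
    · have := hw.2
      rw [hHs w hw1] at this
      rcases chord_zero ha hb hne hw1 this with rfl | rfl
      · rfl
      · exact hxb
  have hCd : ∀ w ∈ ball (0:ℂ) 1 \ {0}, H w ≠ 0 → (φ w)⁻¹ ∉ C := by
    rintro w hw hHw ⟨t, ht, htw⟩
    rcases hcases t ht.1 with htb | ht1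
    · have := h.inj' ⟨htb, (hTs ht).2⟩ hw htw
      subst this
      exact hHw ht.2
    · apply bd_not_mem h hc ht1
      have htw' : (φ t)⁻¹ = (φ w)⁻¹ := htw
      rw [htw']; exact h.memU hw.1 hw.2
  have ha0 : a ≠ 0 := by rintro rfl; simp at ha
  have hxne : φ a ≠ 0 := bd_ne_zero h hc ha.le ha0
  have hxf : x ∈ frontier (outer K) := bd_frontier hK h hc ha
  -- choose points near y
  have pick : ∀ S : Set ℂ, IsOpen S → (∃ m ∈ S, ‖m‖ = 1) → ∃ w ∈ ball (0:ℂ) 1 \ {0}, w ∈ S ∧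
      ∃ N : Set ℂ, IsPreconnected N ∧ N ⊆ Cᶜ ∧ (φ w)⁻¹ ∈ N ∧ ∃ p ∈ N, p ∈ K \ {x} := by
    rintro S hS ⟨m, hmS, hm1⟩
    obtain ⟨y, hyS, hy1, hyne⟩ := nonconst_arc hc h.diff (c := φ a) (by rw [h.zero]; exact hxne.symm)
      hS hm1 hmS
    have hy0 : y ≠ 0 := by rintro rfl; simp at hy1
    have hyx : (φ y)⁻¹ ≠ x := fun he => hyne (inv_injective he)
    have hyK : (φ y)⁻¹ ∈ K := outer_frontier hK (bd_frontier hK h hc hy1)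
    have hyC : (φ y)⁻¹ ∈ Cᶜ := fun hh => hyx (hKC ⟨hyK, hh⟩)
    obtain ⟨s, hs, hsC⟩ := Metric.isOpen_iff.1 hCc.isClosed.isOpen_compl _ hyC
    have hmem : y ∈ closure (ball (0:ℂ) 1) := by
      rw [closure_ball _ one_ne_zero]; simpa using hy1.le
    have : (𝓝[ball 0 1] y).NeBot := mem_closure_iff_nhdsWithin_neBot.1 hmem
    have ht : Tendsto φ (𝓝[ball 0 1] y) (𝓝 (φ y)) :=
      (hc y (by simpa using hy1.le)).mono_left (nhdsWithin_mono _ ball_subset_closedBall)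
    have ht2 := ht.inv₀ (bd_ne_zero h hc hy1.le hy0)
    have e1 := ht2.eventually (ball_mem_nhds _ hs)
    have e2 : ∀ᶠ w in 𝓝[ball 0 1] y, w ∈ S := mem_nhdsWithin_of_mem_nhds (hS.mem_nhds hyS)
    have e3 : ∀ᶠ w in 𝓝[ball 0 1] y, w ≠ 0 :=
      mem_nhdsWithin_of_mem_nhds (isOpen_compl_singleton.mem_nhds hy0)
    obtain ⟨w, ⟨⟨h1, h2⟩, h3⟩, h4⟩ := (((e1.and e2).and e3).and self_mem_nhdsWithin).exists
    exact ⟨w, ⟨h4, h3⟩, h2, ball (φ y)⁻¹ s, (convex_ball _ _).isPreconnected, hsC, h1,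
      (φ y)⁻¹, mem_ball_self hs, hyK, hyx⟩
  obtain ⟨⟨m1, hm1, hm1l⟩, ⟨m2, hm2, hm2l⟩⟩ := arc_points ha hb hne
  have hO1 : IsOpen {w | 0 < H w} := isOpen_lt continuous_const hHc
  have hO2 : IsOpen {w | H w < 0} := isOpen_lt hHc continuous_const
  obtain ⟨w1, hw1, hw1H, N1, hN1, hN1C, hw1N, p1, hp1, hp1K⟩ := pick _ hO1
    ⟨m1, by simp only [mem_ofPred_eq]; rw [hHs m1 hm1]; exact hm1l, hm1⟩
  obtain ⟨w2, hw2, hw2H, N2, hN2, hN2C, hw2N, p2, hp2, hp2K⟩ := pick _ hO2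
    ⟨m2, by simp only [mem_ofPred_eq]; rw [hHs m2 hm2]; exact hm2l, hm2⟩
  have hKx : K \ {x} ⊆ Cᶜ := fun z hz hzC => hz.2 (hKC ⟨hz.1, hzC⟩)
  have hS1 := IsPreconnected.union p1 hp1 hp1K hN1 (hcut x hxf)
  have hS2 := IsPreconnected.union p2 (Or.inr hp2K) hp2 hS1 hN2
  refine sep_lemma hK h hCc ?_ hO1 hO2 ?_ ⟨hw1, hw1H⟩ ⟨hw2, hw2H⟩ ?_ (hN1C hw1N)
    (mem_component_of_preconnected hS2 (union_subset (union_subset hN1C hKx) hN2C)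
      (Or.inl (Or.inl hw1N)) (Or.inr hw2N))
  · exact (subsingleton_singleton.anti hKC).isPreconnected
  · exact disjoint_left.2 fun z (h1 : 0 < H z) (h2 : H z < 0) => lt_asymm h1 h2
  · intro w hw h1 h2
    simp only [mem_ofPred_eq, not_lt] at h1 h2
    exact ⟨w, ⟨ball_subset_closedBall hw.1, le_antisymm h1 h2⟩, rfl⟩

end

theorem outer_jordan {K : Set ℂ} (hK : IsCompact K) (hKc : IsPreconnected K) {r0 : ℝ}
    (hr0 : 0 < r0) (hr0K : ball 0 r0 ⊆ K) (hU : ULC K)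
    (hcut : ∀ x ∈ frontier (outer K), IsPreconnected (K \ {x})) :
    Nonempty (↥(Metric.sphere (0 : ℂ) 1) ≃ₜ ↥(frontier (outer K))) := by
  obtain ⟨φ, h, hc⟩ := exists_extMap_cont hK hKc hr0 hr0K hU
  have hs : ∀ z : sphere (0:ℂ) 1, ‖(z:ℂ)‖ = 1 := fun z => by simp
  let f : sphere (0:ℂ) 1 → frontier (outer K) := fun z => ⟨(φ z)⁻¹, bd_frontier hK h hc (hs z)⟩
  have hf : Function.Bijective f := by
    constructor
    · intro a b hab
      have : (φ a)⁻¹ = (φ b)⁻¹ := congrArg Subtype.val hab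
      exact Subtype.ext (bd_inj hK h hc hcut (hs a) (hs b) (inv_injective this))
    · rintro ⟨y, hy⟩
      obtain ⟨ζ, hζ, he⟩ := bd_surj hK hr0 hr0K h hc hy
      exact ⟨⟨ζ, by simpa using hζ⟩, Subtype.ext he⟩
  have hfc : Continuous f := by
    apply Continuous.subtype_mk
    have h1 : ContinuousOn (fun w => (φ w)⁻¹) (sphere (0:ℂ) 1) := (contΦ h hc).mono (by
      intro z hz
      refine ⟨sphere_subset_closedBall hz, ?_⟩
      rintro rfl
      simp at hz)
    exact continuousOn_iff_continuous_domRestrict.1 h1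
  have : CompactSpace (sphere (0:ℂ) 1) := isCompact_iff_compactSpace.1 (isCompact_sphere _ _)
  exact ⟨Continuous.homeoOfEquivCompactToT2 (f := Equiv.ofBijective f hf) hfc⟩

open Set Metric Bornology Filter Topology

lemma preconn_frontier {t s : Set ℂ} (ht : IsPreconnected t) (h1 : (t ∩ s).Nonempty)
    (h2 : (t ∩ sᶜ).Nonempty) : (t ∩ frontier s).Nonempty := by
  by_contra hcon
  have hn : ∀ z ∈ t, z ∈ closure s → z ∈ interior s := by
    intro z hz hc
    by_contra hi
    exact hcon ⟨z, hz, hc, hi⟩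
  obtain ⟨a, hat, has⟩ := h1
  obtain ⟨b, hbt, hbs⟩ := h2
  obtain ⟨z, _, hz1, hz2⟩ := ht (interior s) (closure s)ᶜ isOpen_interior isClosed_closure.isOpen_compl
    (fun z hz => by
      by_cases hc : z ∈ closure s
      · exact Or.inl (hn z hz hc)
      · exact Or.inr hc)
    ⟨a, hat, hn a hat (subset_closure has)⟩
    ⟨b, hbt, fun hc => hbs (interior_subset (hn b hbt hc))⟩
  exact hz2 (subset_closure (interior_subset hz1))

theorem outer_jordan_center {K : Set ℂ} (hK : IsCompact K) (hKc : IsPreconnected K) {r0 : ℝ} {p : ℂ}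
    (hr0 : 0 < r0) (hr0K : ball p r0 ⊆ K) (hU : ULC K)
    (hcut : ∀ x ∈ frontier (outer K), IsPreconnected (K \ {x})) :
    Nonempty (↥(Metric.sphere (0 : ℂ) 1) ≃ₜ ↥(frontier (outer K))) := by
  let h : ℂ ≃ₜ ℂ := Homeomorph.addRight (-p)
  have hh : ∀ z, h z = z + -p := fun z => rfl
  have hiso : Isometry h := Isometry.of_dist_eq (fun x y => by simp [hh])
  have hout : outer (h '' K) = h '' outer K := by
    have key : ∀ z, h z ∈ outer (h '' K) ↔ z ∈ outer K := by
      intro z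
      have e1 : h z ∈ h '' K ↔ z ∈ K := h.injective.mem_set_image
      by_cases hz : z ∈ K
      · constructor
        · intro h'; exact (h'.1 (e1.2 hz)).elim
        · intro h'; exact (h'.1 hz).elim
      have e2 : connectedComponentIn (h '' K)ᶜ (h z) = h '' connectedComponentIn Kᶜ z := by
        rw [Homeomorph.image_connectedComponentIn h hz, image_compl_eq h.bijective]
      have e3 : IsBounded (h '' connectedComponentIn Kᶜ z) ↔ IsBounded (connectedComponentIn Kᶜ z) :=
        ⟨fun hb => (hiso.antilipschitz.isBounded_preimage hb).subset (subset_preimage_image _ _), fun hb => hiso.lipschitz.isBounded_image hb⟩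
      simp only [outer, mem_ofPred_eq, e1, e2, e3]
    ext w
    obtain ⟨z, rfl⟩ := h.surjective w
    rw [key, h.injective.mem_set_image]
  have hfr : frontier (outer (h '' K)) = h '' frontier (outer K) := by
    rw [hout, h.image_frontier]
  have hball : ball 0 r0 ⊆ h '' K := by
    intro z hz
    refine ⟨z + p, hr0K ?_, by simp [hh]⟩
    simpa [dist_eq_norm] using hz
  obtain ⟨g⟩ := outer_jordan (K := h '' K) (hK.image h.continuous) (hKc.image _ h.continuous.continuousOn)
    hr0 hball (by
      intro ε hε
      obtain ⟨δ, hδ, hE⟩ := hU ε hε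
      refine ⟨δ, hδ, ?_⟩
      rintro _ ⟨x, hx, rfl⟩ _ ⟨y, hy, rfl⟩ hd
      rw [hiso.dist_eq] at hd
      obtain ⟨E, h1, h2, h3, h4, h5⟩ := hE x hx y hy hd
      refine ⟨h '' E, image_mono h1, ?_, ⟨x, h3, rfl⟩, ⟨y, h4, rfl⟩, h5.image _ h.continuous.continuousOn⟩
      rintro _ ⟨z, hz, rfl⟩
      rw [mem_closedBall, hiso.dist_eq]
      exact h2 hz) (by
      intro x hx
      rw [hfr] at hx
      obtain ⟨y, hy, rfl⟩ := hx
      rw [← image_singleton, ← image_sdiff h.injective]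
      exact (hcut y hy).image _ h.continuous.continuousOn)
  exact ⟨(g.trans (Homeomorph.setCongr hfr)).trans (h.image _).symm⟩

lemma circle_arc {u v : ℂ} (hu : ‖u‖ = 1) (hv : ‖v‖ = 1) (huv : dist u v < 1) :
    ∃ A ⊆ sphere (0:ℂ) 1, A ⊆ closedBall u (2 * dist u v) ∧ u ∈ A ∧ v ∈ A ∧ IsPreconnected A := by
  have hseg : ∀ p ∈ segment ℝ u v, dist p u ≤ dist u v := by
    intro p hp
    have := segment_subset_closedBall_left (x := u) (y := v) hp
    simpa using this
  have hp0 : ∀ p ∈ segment ℝ u v, p ≠ 0 := by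
    rintro p hp rfl
    have := hseg 0 hp
    rw [dist_comm, dist_zero_right, hu] at this
    linarith
  refine ⟨(fun p : ℂ => p / (‖p‖ : ℂ)) '' segment ℝ u v, ?_, ?_, ?_, ?_, ?_⟩
  · rintro _ ⟨p, hp, rfl⟩
    have := norm_ne_zero_iff.2 (hp0 p hp)
    simp [this]
  · rintro _ ⟨p, hp, rfl⟩
    have h1 := hseg p hp
    have hn := norm_ne_zero_iff.2 (hp0 p hp)
    have hnc : (‖p‖ : ℂ) ≠ 0 := by exact_mod_cast hn
    have h2 : dist (p / (‖p‖ : ℂ)) p ≤ dist p u := by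
      rw [dist_eq_norm, show p / (‖p‖ : ℂ) - p = (p / (‖p‖ : ℂ)) * ((1 - ‖p‖ : ℝ) : ℂ) by
        push_cast; field_simp]
      rw [norm_mul, norm_div, Complex.norm_real, norm_norm, div_self hn, one_mul, Complex.norm_real,
        Real.norm_eq_abs, ← hu, dist_comm, dist_eq_norm]
      exact abs_norm_sub_norm_le u p
    rw [mem_closedBall]
    linarith [dist_triangle (p / (‖p‖ : ℂ)) p u]
  · exact ⟨u, left_mem_segment _ _ _, by simp [hu]⟩
  · exact ⟨v, right_mem_segment _ _ _, by simp [hv]⟩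
  · refine (convex_segment u v).isPreconnected.image _ ?_
    apply continuousOn_id.div (by fun_prop)
    intro p hp
    exact_mod_cast norm_ne_zero_iff.2 (hp0 p hp)

lemma jordan_ulc {J : Set ℂ} (e : ↥(Metric.sphere (0 : ℂ) 1) ≃ₜ ↥J) : ULC J := by
  intro ε hε
  have : CompactSpace (sphere (0:ℂ) 1) := isCompact_iff_compactSpace.1 (isCompact_sphere _ _)
  have : CompactSpace J := e.compactSpace
  have h1 := CompactSpace.uniformContinuous_of_continuous e.continuous
  have h2 := CompactSpace.uniformContinuous_of_continuous e.symm.continuous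
  obtain ⟨η, hη, he⟩ := Metric.uniformContinuous_iff.1 h1 ε hε
  obtain ⟨δ, hδ, hes⟩ := Metric.uniformContinuous_iff.1 h2 (min (η / 4) 1) (by positivity)
  refine ⟨δ, hδ, fun x hx y hy hxy => ?_⟩
  set u := e.symm ⟨x, hx⟩ with hu
  set v := e.symm ⟨y, hy⟩ with hv
  have huv : dist u v < min (η / 4) 1 := hes (a := ⟨x, hx⟩) (b := ⟨y, hy⟩) hxy
  have huv' : dist (u : ℂ) (v : ℂ) < min (η / 4) 1 := huv
  obtain ⟨A, hA, hAb, huA, hvA, hAp⟩ := circle_arc (u := u) (v := v) (by simp) (by simp)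
    (huv'.trans_le (min_le_right _ _))
  refine ⟨(fun z : sphere (0:ℂ) 1 => (e z : ℂ)) '' (Subtype.val ⁻¹' A), ?_, ?_, ?_, ?_, ?_⟩
  · rintro _ ⟨z, hz, rfl⟩
    exact (e z).2
  · rintro _ ⟨z, hz, rfl⟩
    have hzu : dist z u < η := by
      have h3 := hAb hz
      rw [mem_closedBall] at h3
      have h4 : dist z u = dist (z:ℂ) u := rfl
      have := min_le_left (η / 4) 1
      linarith
    have h5 := he hzu
    have h6 : e u = ⟨x, hx⟩ := by rw [hu]; simp
    rw [h6] at h5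
    exact le_of_lt h5
  · exact ⟨u, huA, by simp [hu]⟩
  · exact ⟨v, hvA, by simp [hv]⟩
  · apply IsPreconnected.image _ _ (by fun_prop)
    have : Subtype.val '' (Subtype.val ⁻¹' A : Set (sphere (0:ℂ) 1)) = A := by
      rw [Subtype.image_preimage_coe, inter_eq_right]; exact hA
    rw [← this] at hAp
    exact (Topology.IsInducing.subtypeVal.isPreconnected_image).1 hAp

lemma first_hit {W : Set ℂ} (hW : IsOpen W) {z f : ℂ} (hz : z ∈ closure W) (hf : f ∈ frontier W) :
    ∃ A ⊆ segment ℝ z f, A ⊆ closure W ∧ z ∈ A ∧ IsPreconnected A ∧ (A ∩ frontier W).Nonempty := by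
  set g : ℝ → ℂ := fun t => AffineMap.lineMap z f t with hg
  have hgc : Continuous g := AffineMap.lineMap_continuous
  have hg0 : g 0 = z := by simp [hg]
  have hg1 : g 1 = f := by simp [hg]
  set S : Set ℝ := Icc 0 1 ∩ g ⁻¹' frontier W with hS
  have hSc : IsCompact S := isCompact_Icc.inter_right (isClosed_frontier.preimage hgc)
  obtain ⟨t, ht, htl⟩ := hSc.exists_isLeast ⟨1, by simp, by rw [mem_preimage, hg1]; exact hf⟩
  have hpre : IsPreconnected (g '' Icc 0 t) := isPreconnected_Icc.image _ hgc.continuousOn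
  have hpre2 : IsPreconnected (g '' Ico 0 t) := isPreconnected_Ico.image _ hgc.continuousOn
  have hlt : ∀ s ∈ Ico 0 t, g s ∉ frontier W := by
    intro s hs hsf
    exact absurd (htl ⟨⟨hs.1, hs.2.le.trans ht.1.2⟩, hsf⟩) (not_le.2 hs.2)
  refine ⟨g '' Icc 0 t, ?_, ?_, ⟨0, ⟨le_rfl, ht.1.1⟩, hg0⟩, hpre,
    ⟨g t, ⟨t, ⟨ht.1.1, le_rfl⟩, rfl⟩, ht.2⟩⟩
  · rw [segment_eq_image_lineMap]
    exact image_mono (Icc_subset_Icc_right ht.1.2)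
  · rintro _ ⟨s, hs, rfl⟩
    rcases eq_or_lt_of_le hs.2 with rfl | hst
    · exact frontier_subset_closure ht.2
    have h0 : (0:ℝ) ∈ Ico 0 t := ⟨le_rfl, hs.1.trans_lt hst⟩
    have hzW : g 0 ∈ W := by
      by_contra hcon
      apply hlt 0 h0
      rw [hW.frontier_eq]
      exact ⟨by rw [hg0]; exact hz, hcon⟩
    by_contra hcon
    obtain ⟨_, ⟨s', hs', rfl⟩, hsf⟩ := preconn_frontier hpre2 (s := W)
      ⟨g 0, ⟨0, h0, rfl⟩, hzW⟩
      ⟨g s, ⟨s, ⟨hs.1, hst⟩, rfl⟩, fun hh => hcon (subset_closure hh)⟩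
    exact hlt s' hs' hsf

lemma jordan_closure_ulc {W : Set ℂ} (hW : IsOpen W)
    (hJ : Nonempty (↥(Metric.sphere (0 : ℂ) 1) ≃ₜ ↥(frontier W))) : ULC (closure W) := by
  obtain ⟨e⟩ := hJ
  intro ε hε
  obtain ⟨δ, hδ, hE⟩ := jordan_ulc e (ε / 2) (by positivity)
  refine ⟨min (δ / 2) (ε / 2), by positivity, fun a ha b hb hab => ?_⟩
  have hab1 := hab.trans_le (min_le_left _ _)
  have hab2 := hab.trans_le (min_le_right _ _)
  have hseg : segment ℝ a b ⊆ closedBall a (dist a b) := segment_subset_closedBall_left a b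
  have hsegε : segment ℝ a b ⊆ closedBall a ε :=
    hseg.trans (closedBall_subset_closedBall (by linarith))
  have hsp : IsPreconnected (segment ℝ a b) := (convex_segment a b).isPreconnected
  rcases (segment ℝ a b ∩ frontier W).eq_empty_or_nonempty with hem | ⟨f, hfs, hfW⟩
  · refine ⟨segment ℝ a b, ?_, hsegε, left_mem_segment _ _ _, right_mem_segment _ _ _, hsp⟩
    have haW : a ∈ W := by
      by_contra hcon
      have : a ∈ segment ℝ a b ∩ frontier W :=
        ⟨left_mem_segment _ _ _, by rw [hW.frontier_eq]; exact ⟨ha, hcon⟩⟩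
      rw [hem] at this; exact this
    intro z hz
    by_contra hcon
    obtain ⟨y, hy⟩ := preconn_frontier hsp (s := W) ⟨a, left_mem_segment _ _ _, haW⟩
      ⟨z, hz, fun hh => hcon (subset_closure hh)⟩
    rw [hem] at hy; exact hy
  · obtain ⟨E, hEc, hFE, hEJ, hEb, hEp⟩ := ulc_hull isClosed_frontier (by positivity) hE
      (F := segment ℝ a b ∩ frontier W) inter_subset_right (inter_subset_left.trans hseg)
      (by linarith)
    have sub : ∀ z ∈ segment ℝ a b, segment ℝ z f ⊆ segment ℝ a b := fun z hz =>
      (convex_segment a b).segment_subset hz hfs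
    obtain ⟨A, hAs, hAW, haA, hAp, p, hpA, hpf⟩ := first_hit hW ha hfW
    obtain ⟨B, hBs, hBW, hbB, hBp, q, hqB, hqf⟩ := first_hit hW hb hfW
    have hAs' := hAs.trans (sub a (left_mem_segment _ _ _))
    have hBs' := hBs.trans (sub b (right_mem_segment _ _ _))
    have u1 := IsPreconnected.union p hpA (hFE ⟨hAs' hpA, hpf⟩) hAp hEp
    have u2 := IsPreconnected.union q (Or.inr (hFE ⟨hBs' hqB, hqf⟩)) hqB u1 hBp
    refine ⟨(A ∪ E) ∪ B, ?_, ?_, Or.inl (Or.inl haA), Or.inr hbB, u2⟩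
    · exact union_subset (union_subset hAW (hEJ.trans frontier_subset_closure)) hBW
    · refine union_subset (union_subset (hAs'.trans hsegε) ?_) (hBs'.trans hsegε)
      exact hEb.trans (closedBall_subset_closedBall (by linarith))

lemma ulc_at {A : Set ℂ} (hA : IsClosed A) (hU : ULC A) (c : ℂ) {ε : ℝ} (hε : 0 < ε) :
    ∃ δ > 0, ∀ q ∈ A, dist c q < δ →
      ∃ E ⊆ A, E ⊆ closedBall c ε ∧ c ∈ E ∧ q ∈ E ∧ IsPreconnected E := by
  by_cases hc : c ∈ A
  · obtain ⟨δ, hδ, h⟩ := hU ε hε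
    exact ⟨δ, hδ, fun q hq hcq => h c hc q hq hcq⟩
  · obtain ⟨δ, hδ, h⟩ := Metric.isOpen_iff.1 hA.isOpen_compl c hc
    refine ⟨δ, hδ, fun q hq hcq => ?_⟩
    exact (h (by rwa [mem_ball, dist_comm]) hq).elim

lemma ulc_of_pointwise {K : Set ℂ} (hK : IsCompact K)
    (h : ∀ c ∈ K, ∀ ε > 0, ∃ δ > 0, ∀ q ∈ K, dist c q < δ →
      ∃ E ⊆ K, E ⊆ closedBall c ε ∧ c ∈ E ∧ q ∈ E ∧ IsPreconnected E) : ULC K := by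
  intro ε hε
  have h' : ∀ c : K, ∃ δ > 0, ∀ q ∈ K, dist (c:ℂ) q < δ →
      ∃ E ⊆ K, E ⊆ closedBall (c:ℂ) (ε / 2) ∧ (c:ℂ) ∈ E ∧ q ∈ E ∧ IsPreconnected E :=
    fun c => h c c.2 (ε / 2) (by positivity)
  choose δ hδ hE using h'
  obtain ⟨η, hη, hL⟩ := lebesgue_number_lemma_of_metric hK (c := fun c : K => ball (c:ℂ) (δ c))
    (fun c => isOpen_ball) (fun x hx => mem_iUnion.2 ⟨⟨x, hx⟩, mem_ball_self (hδ _)⟩)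
  refine ⟨η, hη, fun x hx y hy hxy => ?_⟩
  obtain ⟨c, hc⟩ := hL x hx
  have hxc := hc (mem_ball_self hη)
  have hyc := hc (by rwa [mem_ball, dist_comm] : y ∈ ball x η)
  obtain ⟨E1, a1, a2, a3, a4, a5⟩ := hE c x hx (by rwa [mem_ball, dist_comm] at hxc)
  obtain ⟨E2, b1, b2, b3, b4, b5⟩ := hE c y hy (by rwa [mem_ball, dist_comm] at hyc)
  refine ⟨E1 ∪ E2, union_subset a1 b1, ?_, Or.inl a4, Or.inr b4, IsPreconnected.union (c:ℂ) a3 b3 a5 b5⟩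
  have hx2 := a2 a4
  rw [mem_closedBall] at hx2
  exact (union_subset a2 b2).trans (closedBall_subset_closedBall' (by rw [dist_comm]; linarith))

section
variable {W : ℕ → Set ℂ}

lemma tail_small (hb : ∀ i, IsBounded (W i))
    (hdiam : Filter.Tendsto (fun i => Metric.diam (W i)) Filter.atTop (nhds 0)) {η : ℝ} (hη : 0 < η) :
    ∃ N, 1 ≤ N ∧ ∀ i ≥ N, ∀ p ∈ closure (W i), ∀ q ∈ closure (W i), dist p q < η := by
  have := hdiam.eventually (gt_mem_nhds hη)
  obtain ⟨N, hN⟩ := eventually_atTop.1 this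
  refine ⟨max N 1, le_max_right _ _, fun i hi p hp q hq => ?_⟩
  have h1 := hN i ((le_max_left _ _).trans hi)
  rw [← Metric.diam_closure] at h1
  exact (Metric.dist_le_diam_of_mem (hb i).closure hp hq).trans_lt h1

lemma closure_iUnion_eq (hb : ∀ i, IsBounded (W i))
    (hdiam : Filter.Tendsto (fun i => Metric.diam (W i)) Filter.atTop (nhds 0))
    (hmeet : ∀ i, 1 ≤ i → (W 0 ∩ W i).Nonempty) :
    closure (⋃ i, W i) = ⋃ i, closure (W i) := by
  apply subset_antisymm
  · intro c hc
    by_contra hcon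
    simp only [mem_iUnion, not_exists] at hcon
    obtain ⟨d, hd, hdW⟩ := Metric.isOpen_iff.1 (isClosed_closure (s := W 0)).isOpen_compl c (hcon 0)
    obtain ⟨N, hN1, hN⟩ := tail_small hb hdiam (half_pos hd)
    have hsub : (⋃ i, W i) ⊆ (⋃ i ∈ Finset.range N, closure (W i)) ∪ (ball c (d / 2))ᶜ := by
      intro y hy
      obtain ⟨i, hi⟩ := mem_iUnion.1 hy
      by_cases hiN : i < N
      · left
        exact mem_iUnion₂.2 ⟨i, Finset.mem_range.2 hiN, subset_closure hi⟩
      · right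
        intro hyc
        push Not at hiN
        obtain ⟨q, hq0, hqi⟩ := hmeet i (hN1.trans hiN)
        have e1 := hN i hiN y (subset_closure hi) q (subset_closure hqi)
        rw [mem_ball] at hyc
        apply hdW _ (subset_closure hq0)
        rw [mem_ball]
        linarith [dist_triangle_left q c y]
    have hcl : IsClosed ((⋃ i ∈ Finset.range N, closure (W i)) ∪ (ball c (d / 2))ᶜ) := by
      apply IsClosed.union _ isOpen_ball.isClosed_compl
      exact isClosed_biUnion_finset (fun i _ => isClosed_closure)
    rcases closure_minimal hsub hcl hc with h | h
    · obtain ⟨i, -, hi⟩ := mem_iUnion₂.1 h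
      exact hcon i hi
    · exact h (mem_ball_self (half_pos hd))
  · exact iUnion_subset fun i => closure_mono (subset_iUnion W i)

lemma union_bounded (hb : ∀ i, IsBounded (W i))
    (hdiam : Filter.Tendsto (fun i => Metric.diam (W i)) Filter.atTop (nhds 0))
    (hmeet : ∀ i, 1 ≤ i → (W 0 ∩ W i).Nonempty) : IsBounded (⋃ i, W i) := by
  obtain ⟨N, hN1, hN⟩ := tail_small hb hdiam one_pos
  have h1 : IsBounded ((⋃ i ∈ Finset.range N, W i) ∪ thickening 1 (W 0)) := by
    apply IsBounded.union
    · exact (isBounded_biUnion_finset _).2 (fun i _ => hb i)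
    · exact (hb 0).thickening
  apply h1.subset
  intro y hy
  obtain ⟨i, hi⟩ := mem_iUnion.1 hy
  by_cases hiN : i < N
  · left
    exact mem_iUnion₂.2 ⟨i, Finset.mem_range.2 hiN, hi⟩
  · right
    push Not at hiN
    obtain ⟨q, hq0, hqi⟩ := hmeet i (hN1.trans hiN)
    rw [mem_thickening_iff]
    exact ⟨q, hq0, hN i hiN y (subset_closure hi) q (subset_closure hqi)⟩

lemma union_cut (hb : ∀ i, IsBounded (W i)) (hc : ∀ i, IsConnected (W i))
    (hdiam : Filter.Tendsto (fun i => Metric.diam (W i)) Filter.atTop (nhds 0))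
    (hmeet : ∀ i, 1 ≤ i → (W 0 ∩ W i).Nonempty) {x : ℂ} (hx : ∀ i, x ∉ W i) :
    IsPreconnected (closure (⋃ i, W i) \ {x}) := by
  rw [closure_iUnion_eq hb hdiam hmeet]
  obtain ⟨p0, hp0⟩ := (hc 0).nonempty
  have hWs : ∀ i, W i ⊆ closure (W i) \ {x} := fun i z hz =>
    ⟨subset_closure hz, by rintro rfl; exact hx i hz⟩
  have hp : ∀ i, IsPreconnected (closure (W i) \ {x}) := fun i =>
    (hc i).isPreconnected.subset_closure (hWs i) sdiff_subset
  apply isPreconnected_of_forall p0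
  rintro y ⟨hy, hyx⟩
  obtain ⟨i, hi⟩ := mem_iUnion.1 hy
  obtain ⟨q, hq0, hqi⟩ : ∃ q, q ∈ W 0 ∧ q ∈ W i := by
    rcases Nat.eq_zero_or_pos i with rfl | h
    · exact ⟨p0, hp0, hp0⟩
    · exact hmeet i h
  refine ⟨(closure (W 0) \ {x}) ∪ (closure (W i) \ {x}), ?_, Or.inl (hWs 0 hp0), Or.inr ⟨hi, hyx⟩,
    IsPreconnected.union q (hWs 0 hq0) (hWs i hqi) (hp 0) (hp i)⟩
  have hs : ∀ i, closure (W i) \ {x} ⊆ (⋃ i, closure (W i)) \ {x} := fun i =>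
    sdiff_subset_sdiff_left (subset_iUnion (fun i => closure (W i)) i)
  exact union_subset (hs 0) (hs i)

lemma union_ulc (hb : ∀ i, IsBounded (W i)) (hc : ∀ i, IsConnected (W i))
    (hU : ∀ i, ULC (closure (W i)))
    (hdiam : Filter.Tendsto (fun i => Metric.diam (W i)) Filter.atTop (nhds 0))
    (hmeet : ∀ i, 1 ≤ i → (W 0 ∩ W i).Nonempty) : ULC (closure (⋃ i, W i)) := by
  apply ulc_of_pointwise (union_bounded hb hdiam hmeet).isCompact_closure
  rw [closure_iUnion_eq hb hdiam hmeet]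
  intro c _ ε hε
  have hsub : ∀ i, closure (W i) ⊆ ⋃ i, closure (W i) := subset_iUnion (fun i => closure (W i))
  have hi := fun i => ulc_at isClosed_closure (hU i) c hε
  choose δ hδ hE using hi
  set δ0 := min (δ 0) ε with hδ0
  have hδ0p : 0 < δ0 := lt_min (hδ 0) hε
  obtain ⟨N, hN1, hN⟩ := tail_small hb hdiam (half_pos hδ0p)
  obtain ⟨δ1, hδ1, hδ1le⟩ : ∃ δ1 > 0, ∀ i < N, δ1 ≤ δ i := by
    refine ⟨(Finset.range N).inf' ⟨0, Finset.mem_range.2 hN1⟩ δ, ?_, ?_⟩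
    · exact (Finset.lt_inf'_iff _).2 (fun i _ => hδ i)
    · intro i hi
      exact Finset.inf'_le _ (Finset.mem_range.2 hi)
  refine ⟨min δ1 (δ0 / 2), lt_min hδ1 (half_pos hδ0p), fun y hy hcy => ?_⟩
  obtain ⟨i, hyi⟩ := mem_iUnion.1 hy
  by_cases hiN : i < N
  · obtain ⟨E, h1, h2⟩ := hE i y hyi ((hcy.trans_le (min_le_left _ _)).trans_le (hδ1le i hiN))
    exact ⟨E, h1.trans (hsub i), h2⟩
  · push Not at hiN
    have hcy2 := hcy.trans_le (min_le_right _ _)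
    obtain ⟨q, hq0, hqi⟩ := hmeet i (hN1.trans hiN)
    have hq0' := subset_closure hq0
    have hqi' := subset_closure hqi
    have e1 := hN i hiN y hyi q hqi'
    have hcq : dist c q < δ0 := by linarith [dist_triangle c y q]
    obtain ⟨E, h1, h2, h3, h4, h5⟩ := hE 0 q hq0' (hcq.trans_le (min_le_left _ _))
    refine ⟨E ∪ closure (W i), union_subset (h1.trans (hsub 0)) (hsub i), ?_, Or.inl h3, Or.inr hyi,
      IsPreconnected.union q h4 hqi' h5 (hc i).isPreconnected.closure⟩
    refine union_subset h2 (fun p hp => ?_)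
    have e2 := hN i hiN p hp y hyi
    rw [mem_closedBall]
    have := min_le_right (δ 0) ε
    rw [dist_comm c y] at hcy2
    linarith [dist_triangle p y c]

end


theorem filled_union_of_jordan_domains_is_jordan
    (W : ℕ → Set ℂ) (hJD : ∀ i, IsJordanDomain (W i))
    (hdiam : Filter.Tendsto (fun i => Metric.diam (W i)) Filter.atTop (nhds 0))
    (hmeet : ∀ i, 1 ≤ i → (W 0 ∩ W i).Nonempty)
    (hdisj : ∀ i j, 1 ≤ j → j < i → closure (W i) ∩ closure (W j) = ∅) :
    IsJordanCurve (frontier (fillHoles (closure (⋃ i, W i)))) := by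
  have hb : ∀ i, IsBounded (W i) := fun i => (hJD i).2.2.1
  have hc : ∀ i, IsConnected (W i) := fun i => (hJD i).2.1
  have ho : ∀ i, IsOpen (W i) := fun i => (hJD i).1
  have hU : ∀ i, ULC (closure (W i)) := fun i => jordan_closure_ulc (ho i) (hJD i).2.2.2
  set K := closure (⋃ i, W i) with hKdef
  have hWK : ∀ i, W i ⊆ K := fun i => (subset_iUnion W i).trans subset_closure
  have hK : IsCompact K := (union_bounded hb hdiam hmeet).isCompact_closure
  have hfill : fillHoles K = (outer K)ᶜ := by
    ext z
    simp only [fillHoles, outer, mem_union, mem_ofPred_eq, mem_compl_iff]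
    tauto
  have hKc : IsPreconnected K := by
    obtain ⟨x, hx⟩ : ∃ x, x ∉ K := by
      by_contra hcon
      push Not at hcon
      have : K = univ := eq_univ_of_forall hcon
      rw [this] at hK
      exact noncompact_univ ℂ hK
    have h1 := union_cut hb hc hdiam hmeet (x := x) (fun i hi => hx (hWK i hi))
    rwa [← hKdef, sdiff_singleton_eq_self hx] at h1
  obtain ⟨p, hp⟩ := (hc 0).nonempty
  obtain ⟨r0, hr0, hr0W⟩ := Metric.isOpen_iff.1 (ho 0) p hp
  unfold IsJordanCurve
  rw [hfill, frontier_compl]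
  refine outer_jordan_center hK hKc hr0 (hr0W.trans (hWK 0)) (union_ulc hb hc hU hdiam hmeet) ?_
  intro x hx
  refine union_cut hb hc hdiam hmeet (fun i hi => ?_)
  obtain ⟨y, hyW, hyo⟩ := mem_closure_iff.1 (frontier_subset_closure hx) (W i) (ho i) hi
  exact hyo.1 (hWK i hyW)
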